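/- Let G be a cyclically 4-edge-connected cubic simple graph containing no cycle of length 3 or 4, and let v1v2v3v4v5 be a 5-cycle in G with ui the third neighbor of vi outside the cycle for each i; assume u1, ..., u5 are pairwise distinct, none of them lies on the cycle, and no two of them are adjacent in G. For each 2-element subset {j, k} of {1, ..., 5} let G_{j,k} be the graph obtained from G by deleting v1, ..., v5, adding a new vertex w adjacent to the three vertices u_m with m ∉ {j, k}, and adding the edge u_j u_k. Then ν(G) ≥ (15/4) · min over all ten 2-element subsets {j,k} of ν(G_{j,k}). -/

import Mathlib

namespace CiDC

open SimpleGraph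

/-- A circuit in a graph: a connected 2-regular subgraph. -/
def IsCircuit {V : Type*} {G : SimpleGraph V} (H : G.Subgraph) : Prop :=
  H.Connected ∧ ∀ v ∈ H.verts, (H.neighborSet v).ncard = 2

open scoped Classical in
/-- A circuit double cover: a multiset of circuits covering every edge exactly twice
(counted with multiplicity). -/
def IsCiDC {V : Type*} (G : SimpleGraph V) (C : Multiset G.Subgraph) : Prop :=
  (∀ H ∈ C, IsCircuit H) ∧ ∀ e ∈ G.edgeSet, C.countP (fun H => e ∈ H.edgeSet) = 2

/-- ν(G): the number of circuit double covers of `G`. -/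
noncomputable def nu {V : Type*} (G : SimpleGraph V) : ℕ :=
  {C : Multiset G.Subgraph | IsCiDC G C}.ncard

/-- A cubic graph: every vertex has degree 3. -/
def IsCubic {V : Type*} (G : SimpleGraph V) : Prop :=
  ∀ v : V, (G.neighborSet v).ncard = 3



/-- The set of edges of `G` between `S` and its complement. -/
def edgeCutOf {V : Type*} (G : SimpleGraph V) (S : Set V) : Set (Sym2 V) :=
  {e | ∃ u v : V, e = s(u, v) ∧ G.Adj u v ∧ u ∈ S ∧ v ∉ S}

/-- An edge cut: a nonempty set of edges of the form `E(S, V \ S)`. -/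
def IsEdgeCut {V : Type*} (G : SimpleGraph V) (F : Set (Sym2 V)) : Prop :=
  F.Nonempty ∧ ∃ S : Set V, F = edgeCutOf G S

/-- A set of edges is circuit-separating if after its removal at least two of the
resulting components contain a circuit. -/
def CircuitSeparating {V : Type*} (G : SimpleGraph V) (F : Set (Sym2 V)) : Prop :=
  ∃ H₁ H₂ : (G.deleteEdges F).Subgraph,
    IsCircuit H₁ ∧ IsCircuit H₂ ∧
      ∃ x ∈ H₁.verts, ∃ y ∈ H₂.verts, ¬ (G.deleteEdges F).Reachable x y

/-- Cyclically 4-edge-connected: every circuit-separating edge cut has size at least 4. -/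
def CyclicallyFourEdgeConnected {V : Type*} (G : SimpleGraph V) : Prop :=
  ∀ F : Set (Sym2 V), IsEdgeCut G F → CircuitSeparating G F → 4 ≤ F.ncard

/-- 2-edge-connected: connected and bridgeless. -/
def TwoEdgeConnected {V : Type*} (G : SimpleGraph V) : Prop :=
  G.Connected ∧ ∀ e : Sym2 V, ¬ G.IsBridge e

/-- 3-edge-connected: connected, and still connected after deleting any ≤ 2 edges. -/
def ThreeEdgeConnected {V : Type*} (G : SimpleGraph V) : Prop :=
  G.Connected ∧ ∀ F : Set (Sym2 V), F.ncard ≤ 2 → (G.deleteEdges F).Connected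

/-!
In a cubic graph the circuits of a double cover through a vertex use each of its three corners
(pairs of incident edges) once. So a double cover amounts to one bit per edge, saying which of the
two matchings joins the corners at one end to those at the other; conversely, bits give a double
cover exactly when the closed walks they trace are simple.

Cut `G` and all ten reductions along the five edges leaving the pentagon, so that they share their
outer part. Once the bits of the outer part are fixed, it matters only through the walks it cuts
into: how they connect the corners at the five ports, and which of them share a vertex. Orienting
the walks suitably turns the connection pattern into a fixed-point-free permutation of the ports.
For every permutation and every set of pairs of disjoint walks, a finite computation compares the
numbers of admissible inner bits: summed over the reductions, with weight 2 on the five pairs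
`{i, i + 1}` and weight 1 on the five pairs `{i, i + 2}`, they are at most four times the number for
the pentagon. The total weight is 15.
-/

/-! ### Corners and dart models -/

/-- The corners of a cubic vertex with darts `0, 1, 2` are its pairs of darts, the corner `c` being
the pair that omits the dart `c`. The corners containing the dart `y` are `cornerAt y false` and
`cornerAt y true`. -/
def cornerAt (y : Fin 3) (b : Bool) : Fin 3 := if b then y + 1 else y + 2

lemma ne_cornerAt (y : Fin 3) (b : Bool) : y ≠ cornerAt y b := by
  revert y b; decide

lemma exists_cornerAt_eq {y c : Fin 3} (h : y ≠ c) : ∃ b, cornerAt y b = c := by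
  revert y c; decide

lemma cornerAt_injective (y : Fin 3) : Function.Injective (cornerAt y) := by
  revert y; decide

section CornerEquiv

variable {Z : Type*} {op : Z × Fin 3 → Z × Fin 3} {β : Z × Fin 3 → Bool}

/-- A dart `(x, y)` leaves the vertex `x`, and `op` sends it to the opposite dart of its edge. The
bit `β` of an edge says which corner at one end is followed by which corner at the other, so that
the classes of `CornerEquiv op β` are closed walks using each edge twice in total. -/
def CornerEquiv (op : Z × Fin 3 → Z × Fin 3) (β : Z × Fin 3 → Bool) :
    Z × Fin 3 → Z × Fin 3 → Prop :=
  Relation.EqvGen fun p q ↦ ∃ x y b, p = (x, cornerAt y b) ∧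
    q = ((op (x, y)).1, cornerAt (op (x, y)).2 (b ^^ β (x, y)))

/-- The closed walks of `CornerEquiv op β` are circuits: none visits a vertex twice. -/
def IsSimple (op : Z × Fin 3 → Z × Fin 3) (β : Z × Fin 3 → Bool) : Prop :=
  ∀ x c c', CornerEquiv op β (x, c) (x, c') → c = c'

namespace CornerEquiv

lemma refl (p : Z × Fin 3) : CornerEquiv op β p p := Relation.EqvGen.refl p

lemma symm {p q : Z × Fin 3} (h : CornerEquiv op β p q) : CornerEquiv op β q p :=
  Relation.EqvGen.symm _ _ h

lemma trans {p q r : Z × Fin 3} (h : CornerEquiv op β p q) (h' : CornerEquiv op β q r) :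
    CornerEquiv op β p r :=
  Relation.EqvGen.trans _ _ _ h h'

lemma link (x : Z) (y : Fin 3) (b : Bool) : CornerEquiv op β (x, cornerAt y b)
    ((op (x, y)).1, cornerAt (op (x, y)).2 (b ^^ β (x, y))) :=
  Relation.EqvGen.rel _ _ ⟨x, y, b, rfl, rfl⟩

lemma map_eq {α : Type*} {f : Z × Fin 3 → α}
    (hf : ∀ x y b, f (x, cornerAt y b) =
      f ((op (x, y)).1, cornerAt (op (x, y)).2 (b ^^ β (x, y))))
    {p q : Z × Fin 3} (h : CornerEquiv op β p q) : f p = f q := by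
  induction h with
  | rel p q hpq => obtain ⟨x, y, b, rfl, rfl⟩ := hpq; exact hf x y b
  | refl p => rfl
  | symm p q _ ih => exact ih.symm
  | trans p q r _ _ ih ih' => exact ih.trans ih'

end CornerEquiv

end CornerEquiv

/-- The cubic graph `H` encoded by darts: after the relabelling `e` of its vertices, the three
neighbours of `x` are the distinct endpoints `(op (x, y)).1`. -/
structure IsDartModel {Z W : Type*} (H : SimpleGraph W) (e : Z ≃ W)
    (op : Z × Fin 3 → Z × Fin 3) : Prop where
  involutive : Function.Involutive op
  adj_iff : ∀ x x', H.Adj (e x) (e x') ↔ ∃ y, (op (x, y)).1 = x'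
  injective : ∀ x, Function.Injective fun y ↦ (op (x, y)).1

/-! ### The double cover traced by a bit function -/

section Trace

variable {Z W : Type*} {H : SimpleGraph W} {e : Z ≃ W} {op : Z × Fin 3 → Z × Fin 3}
  {β β' : Z × Fin 3 → Bool} {p q : Z × Fin 3} {x : Z}

/-- The closed walk through the corner `p`, as a subgraph. -/
def trace (M : IsDartModel H e op) (β : Z × Fin 3 → Bool) (p : Z × Fin 3) : H.Subgraph where
  verts := {w | ∃ c, CornerEquiv op β (e.symm w, c) p}
  Adj w w' := ∃ c y, CornerEquiv op β (e.symm w, c) p ∧ y ≠ c ∧ (op (e.symm w, y)).1 = e.symm w'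
  adj_sub := by
    rintro w w' ⟨c, y, -, -, h⟩
    simpa using (M.adj_iff (e.symm w) (e.symm w')).2 ⟨y, h⟩
  edge_vert := fun ⟨c, _, h, _⟩ ↦ ⟨c, h⟩
  symm := by
    constructor
    rintro w w' ⟨c, y, h, hy, hw'⟩
    obtain ⟨b, rfl⟩ := exists_cornerAt_eq hy
    have hlink := CornerEquiv.link (op := op) (β := β) (e.symm w) y b
    rw [hw'] at hlink
    refine ⟨_, (op (e.symm w, y)).2, hlink.symm.trans h, ne_cornerAt _ _, ?_⟩
    rw [← hw', Prod.mk.eta, M.involutive]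

lemma mem_verts_trace (M : IsDartModel H e op) :
    e x ∈ (trace M β p).verts ↔ ∃ c, CornerEquiv op β (x, c) p := by
  simp [trace]

lemma trace_adj_op (M : IsDartModel H e op) {y : Fin 3} :
    (trace M β p).Adj (e x) (e (op (x, y)).1) ↔ ∃ c, CornerEquiv op β (x, c) p ∧ y ≠ c := by
  simp only [trace, Equiv.symm_apply_apply]
  constructor
  · rintro ⟨c, y', h, hy, hyy'⟩
    obtain rfl := M.injective x hyy'
    exact ⟨c, h, hy⟩
  · rintro ⟨c, h, hy⟩
    exact ⟨c, y, h, hy, rfl⟩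

lemma trace_congr (M : IsDartModel H e op) (h : CornerEquiv op β p q) :
    trace M β p = trace M β q := by
  have hpq : ∀ r, CornerEquiv op β r p ↔ CornerEquiv op β r q :=
    fun r ↦ ⟨fun hr ↦ hr.trans h, fun hr ↦ hr.trans h.symm⟩
  simp only [trace, hpq]

lemma neighborSet_eq_image_darts (M : IsDartModel H e op) (K : H.Subgraph) (x : Z) :
    K.neighborSet (e x) =
      (fun y ↦ e (op (x, y)).1) '' {y | K.Adj (e x) (e (op (x, y)).1)} := by
  ext w
  obtain ⟨x', rfl⟩ := e.surjective w
  constructor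
  · intro h
    obtain ⟨y, rfl⟩ := (M.adj_iff x x').1 (K.adj_sub h)
    exact ⟨y, h, rfl⟩
  · rintro ⟨y, h, hy⟩
    exact hy ▸ h

lemma ncard_neighborSet_eq (M : IsDartModel H e op) (K : H.Subgraph) (x : Z) :
    (K.neighborSet (e x)).ncard = {y | K.Adj (e x) (e (op (x, y)).1)}.ncard := by
  rw [neighborSet_eq_image_darts M]
  exact Set.ncard_image_of_injective _ (e.injective.comp (M.injective x))

lemma ncard_ne_fin_three (c : Fin 3) : {y : Fin 3 | y ≠ c}.ncard = 2 := by
  rw [Set.ncard_eq_toFinset_card']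
  revert c; decide

/-- The subgraph `K` runs through the corner `c` of `x` and avoids the dart `c`. -/
def PassesThrough (e : Z ≃ W) (op : Z × Fin 3 → Z × Fin 3) (K : H.Subgraph) (x : Z) (c : Fin 3) :
    Prop :=
  ∀ y, K.Adj (e x) (e (op (x, y)).1) ↔ y ≠ c

lemma PassesThrough.unique {K : H.Subgraph} {c c' : Fin 3} (h : PassesThrough e op K x c)
    (h' : PassesThrough e op K x c') : c = c' := by
  by_contra hne
  exact (h c).1 ((h' c).2 hne) rfl

lemma PassesThrough.mem_verts {K : H.Subgraph} {c : Fin 3} (h : PassesThrough e op K x c) :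
    e x ∈ K.verts :=
  K.edge_vert ((h (cornerAt c true)).2 (ne_cornerAt c true).symm)

lemma exists_passesThrough (M : IsDartModel H e op) {K : H.Subgraph}
    (hK : (K.neighborSet (e x)).ncard = 2) : ∃ c, PassesThrough e op K x c := by
  classical
  have exists_compl : ∀ s : Finset (Fin 3), s.card = 2 → ∃ c, ∀ y, y ∈ s ↔ y ≠ c := by decide
  rw [ncard_neighborSet_eq M, Set.ncard_eq_toFinset_card'] at hK
  obtain ⟨c, hc⟩ := exists_compl _ hK
  exact ⟨c, fun y ↦ by rw [← hc, Set.mem_toFinset, Set.mem_ofPred_eq]⟩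

lemma passesThrough_trace (M : IsDartModel H e op) (hβ : IsSimple op β) {c : Fin 3}
    (h : CornerEquiv op β (x, c) p) : PassesThrough e op (trace M β p) x c := by
  intro y
  rw [trace_adj_op]
  refine ⟨?_, fun hy ↦ ⟨c, h, hy⟩⟩
  rintro ⟨c', h', hy⟩
  rwa [hβ x c c' (h.trans h'.symm)]

lemma reachable_trace (M : IsDartModel H e op) {q r : Z × Fin 3} (hqr : CornerEquiv op β q r)
    (hq : e q.1 ∈ (trace M β p).verts) (hr : e r.1 ∈ (trace M β p).verts)
    (h : CornerEquiv op β q p) :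
    (trace M β p).coe.Reachable ⟨e q.1, hq⟩ ⟨e r.1, hr⟩ := by
  induction hqr with
  | rel q r hlink =>
    obtain ⟨x, y, b, rfl, rfl⟩ := hlink
    exact Adj.reachable ((trace_adj_op M).2 ⟨_, h, ne_cornerAt _ _⟩)
  | refl q => exact Reachable.refl _
  | symm q r hqr ih => exact (ih hr hq (CornerEquiv.trans hqr h)).symm
  | trans q s r hqs _ ih ih' =>
    have hs := (CornerEquiv.symm hqs).trans h
    have hs' := (mem_verts_trace M).2 ⟨s.2, hs⟩
    exact (ih hq hs' h).trans (ih' hs' hr hs)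

lemma isCircuit_trace (M : IsDartModel H e op) (hβ : IsSimple op β) (p : Z × Fin 3) :
    IsCircuit (trace M β p) := by
  constructor
  · rw [Subgraph.connected_iff, Subgraph.preconnected_iff]
    refine ⟨?_, ⟨e p.1, (mem_verts_trace M).2 ⟨p.2, CornerEquiv.refl _⟩⟩⟩
    rintro ⟨w, hw⟩ ⟨w', hw'⟩
    obtain ⟨x, rfl⟩ := e.surjective w
    obtain ⟨x', rfl⟩ := e.surjective w'
    obtain ⟨c, hc⟩ := (mem_verts_trace M).1 hw
    obtain ⟨c', hc'⟩ := (mem_verts_trace M).1 hw'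
    exact reachable_trace M (hc.trans hc'.symm) hw hw' hc
  · intro w hw
    obtain ⟨x, rfl⟩ := e.surjective w
    obtain ⟨c, hc⟩ := (mem_verts_trace M).1 hw
    have hpass := passesThrough_trace M hβ hc
    simp only [ncard_neighborSet_eq M, hpass _, ncard_ne_fin_three]

lemma trace_corner_injective (M : IsDartModel H e op) (hβ : IsSimple op β) (x : Z) :
    Function.Injective fun c ↦ trace M β (x, c) := by
  intro c c' h
  have hc := passesThrough_trace M hβ (CornerEquiv.refl (x, c))
  have hc' := passesThrough_trace M hβ (CornerEquiv.refl (x, c'))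
  rw [show trace M β (x, c) = trace M β (x, c') from h] at hc
  exact hc.unique hc'

/-- The closed walks of a bit function, as a multiset of subgraphs. -/
noncomputable def traceCover [Finite Z] (M : IsDartModel H e op) (β : Z × Fin 3 → Bool) :
    Multiset H.Subgraph :=
  (Set.finite_range (trace M β)).toFinset.val

lemma mem_traceCover [Finite Z] (M : IsDartModel H e op) {K : H.Subgraph} :
    K ∈ traceCover M β ↔ ∃ p, trace M β p = K := by
  simp [traceCover]

lemma mem_edgeSet_trace_iff (M : IsDartModel H e op) {y : Fin 3} :
    s(e x, e (op (x, y)).1) ∈ (trace M β p).edgeSet ↔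
      ∃ b, trace M β (x, cornerAt y b) = trace M β p := by
  rw [Subgraph.mem_edgeSet]
  constructor
  · rw [trace_adj_op]
    rintro ⟨c, h, hy⟩
    obtain ⟨b, rfl⟩ := exists_cornerAt_eq hy
    exact ⟨b, trace_congr M h⟩
  · rintro ⟨b, hb⟩
    rw [← hb, trace_adj_op]
    exact ⟨_, CornerEquiv.refl _, ne_cornerAt _ _⟩

lemma isCiDC_traceCover [Finite Z] (M : IsDartModel H e op) (hβ : IsSimple op β) :
    IsCiDC H (traceCover M β) := by
  classical
  refine ⟨fun K hK ↦ ?_, fun ed hed ↦ ?_⟩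
  · obtain ⟨p, rfl⟩ := (mem_traceCover M).1 hK
    exact isCircuit_trace M hβ p
  · induction ed using Sym2.ind with | _ w w' =>
    obtain ⟨x, rfl⟩ := e.surjective w
    obtain ⟨x', rfl⟩ := e.surjective w'
    obtain ⟨y, rfl⟩ := (M.adj_iff _ _).1 hed
    have walks_through_edge : (Set.finite_range (trace M β)).toFinset.filter
        (fun K ↦ s(e x, e (op (x, y)).1) ∈ K.edgeSet) =
        Finset.univ.image fun b ↦ trace M β (x, cornerAt y b) := by
      ext K
      simp only [Finset.mem_filter, Set.Finite.mem_toFinset, Set.mem_range, Finset.mem_image,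
        Finset.mem_univ, true_and]
      constructor
      · rintro ⟨⟨p, rfl⟩, h⟩
        exact (mem_edgeSet_trace_iff M).1 h
      · rintro ⟨b, rfl⟩
        exact ⟨⟨_, rfl⟩, (mem_edgeSet_trace_iff M).2 ⟨b, rfl⟩⟩
    have card_walks := Finset.card_image_of_injective Finset.univ
      ((trace_corner_injective M hβ x).comp (cornerAt_injective y))
    simp only [Function.comp_def, ← walks_through_edge, Finset.card_univ, Fintype.card_bool]
      at card_walks
    rw [Finset.card_def, Finset.filter_val, ← Multiset.countP_eq_card_filter] at card_walks
    unfold traceCover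
    convert card_walks

lemma trace_eq_trace_of_traceCover_eq [Finite Z] (M : IsDartModel H e op) (hβ : IsSimple op β)
    (hβ' : IsSimple op β') (h : traceCover M β = traceCover M β') (x : Z) (c : Fin 3) :
    trace M β (x, c) = trace M β' (x, c) := by
  obtain ⟨q, hq⟩ := (mem_traceCover M).1 (h ▸ (mem_traceCover M).2 ⟨(x, c), rfl⟩)
  have hpass := passesThrough_trace M hβ (CornerEquiv.refl (x, c))
  obtain ⟨c', hc'⟩ := (mem_verts_trace M).1 (hq ▸ hpass.mem_verts)
  have hpass' := passesThrough_trace M hβ' hc'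
  rw [hq] at hpass'
  rw [← hq, hpass.unique hpass', trace_congr M hc']

lemma eq_of_traceCover_eq [Finite Z] (M : IsDartModel H e op) (hβ : IsSimple op β)
    (hβ' : IsSimple op β') (h : traceCover M β = traceCover M β') : β = β' := by
  have htrace := trace_eq_trace_of_traceCover_eq M hβ hβ' h
  funext ⟨x, y⟩
  have hlink := trace_congr M (CornerEquiv.link (op := op) (β := β) x y false)
  have hlink' := trace_congr M (CornerEquiv.link (op := op) (β := β') x y false)
  rw [← htrace, ← htrace, hlink] at hlink'
  simpa using cornerAt_injective _ (trace_corner_injective M hβ _ hlink')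

end Trace

/-! ### The bit function of a double cover -/

section CoverBit

variable {Z W : Type*} {H : SimpleGraph W} {e : Z ≃ W} {op : Z × Fin 3 → Z × Fin 3}
  {C : Multiset H.Subgraph}

lemma countP_add_countP_of_disjoint {α : Type*} (s : Multiset α) (P Q R : α → Prop)
    [DecidablePred P] [DecidablePred Q] [DecidablePred R]
    (h : ∀ a ∈ s, (P a ↔ Q a ∨ R a) ∧ ¬ (Q a ∧ R a)) :
    s.countP Q + s.countP R = s.countP P := by
  induction s using Multiset.induction with
  | empty => simp
  | cons a s ih =>
    have ih := ih fun b hb ↦ h b (Multiset.mem_cons_of_mem hb)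
    have ha := h a (Multiset.mem_cons_self _ _)
    simp only [Multiset.countP_cons, ← ih]
    by_cases hQ : Q a <;> by_cases hR : R a <;> simp_all <;> omega

open scoped Classical in
lemma countP_passesThrough_add (M : IsDartModel H e op) (hC : IsCiDC H C) (x : Z) (y : Fin 3) :
    C.countP (PassesThrough e op · x (cornerAt y true)) +
      C.countP (PassesThrough e op · x (cornerAt y false)) = 2 := by
  have hedge : s(e x, e (op (x, y)).1) ∈ H.edgeSet := (M.adj_iff _ _).2 ⟨y, rfl⟩
  rw [countP_add_countP_of_disjoint C fun K ↦ s(e x, e (op (x, y)).1) ∈ K.edgeSet]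
  · exact hC.2 _ hedge
  · intro K hK
    refine ⟨⟨fun h ↦ ?_, ?_⟩, fun ⟨h, h'⟩ ↦ by simpa using cornerAt_injective y (h.unique h')⟩
    · obtain ⟨c, hc⟩ := exists_passesThrough M ((hC.1 K hK).2 _ (K.edge_vert h))
      obtain ⟨b, rfl⟩ := exists_cornerAt_eq ((hc y).1 h)
      cases b
      · exact Or.inr hc
      · exact Or.inl hc
    · rintro (h | h) <;> exact (h y).2 (ne_cornerAt _ _)

open scoped Classical in
lemma countP_passesThrough (M : IsDartModel H e op) (hC : IsCiDC H C) (x : Z) (c : Fin 3) :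
    C.countP (PassesThrough e op · x c) = 1 := by
  have h₀ : C.countP (PassesThrough e op · x 1) + C.countP (PassesThrough e op · x 2) = 2 :=
    countP_passesThrough_add M hC x 0
  have h₁ : C.countP (PassesThrough e op · x 2) + C.countP (PassesThrough e op · x 0) = 2 :=
    countP_passesThrough_add M hC x 1
  have h₂ : C.countP (PassesThrough e op · x 0) + C.countP (PassesThrough e op · x 1) = 2 :=
    countP_passesThrough_add M hC x 2
  obtain rfl | rfl | rfl : c = 0 ∨ c = 1 ∨ c = 2 := by revert c; decide
  all_goals omega

lemma existsUnique_passesThrough (M : IsDartModel H e op) (hC : IsCiDC H C) (p : Z × Fin 3) :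
    ∃! K, K ∈ C ∧ PassesThrough e op K p.1 p.2 := by
  classical
  have h := countP_passesThrough M hC p.1 p.2
  rw [Multiset.countP_eq_card_filter, Multiset.card_eq_one] at h
  obtain ⟨K, hK⟩ := h
  have mem_iff : ∀ L, L ∈ C ∧ PassesThrough e op L p.1 p.2 ↔ L = K := fun L ↦ by
    rw [← Multiset.mem_singleton, ← hK, Multiset.mem_filter]
  exact ⟨K, (mem_iff K).2 rfl, fun L hL ↦ (mem_iff L).1 hL⟩

lemma exists_corner_of_mem (M : IsDartModel H e op) (hC : IsCiDC H C) {K : H.Subgraph}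
    (hK : K ∈ C) : ∃ p : Z × Fin 3, PassesThrough e op K p.1 p.2 := by
  obtain ⟨w, hw⟩ := (Subgraph.connected_iff.1 (hC.1 K hK).1).2
  obtain ⟨x, rfl⟩ := e.surjective w
  obtain ⟨c, hc⟩ := exists_passesThrough M ((hC.1 K hK).2 _ hw)
  exact ⟨(x, c), hc⟩

lemma nodup_of_isCiDC (M : IsDartModel H e op) (hC : IsCiDC H C) : C.Nodup := by
  classical
  rw [Multiset.nodup_iff_count_le_one]
  intro K
  by_cases hK : K ∈ C
  · obtain ⟨p, hp⟩ := exists_corner_of_mem M hC hK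
    rw [← countP_passesThrough M hC p.1 p.2, Multiset.countP_eq_card_filter,
      ← Multiset.count_filter_of_pos (p := (PassesThrough e op · p.1 p.2)) hp]
    exact Multiset.count_le_card _ _
  · simp [Multiset.count_eq_zero_of_notMem hK]

/-- The member of a circuit double cover that runs through a given corner. -/
noncomputable def circuitThrough (M : IsDartModel H e op) (hC : IsCiDC H C) (p : Z × Fin 3) :
    H.Subgraph :=
  (existsUnique_passesThrough M hC p).choose

section

variable (M : IsDartModel H e op) (hC : IsCiDC H C)

lemma circuitThrough_mem (p : Z × Fin 3) : circuitThrough M hC p ∈ C :=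
  (existsUnique_passesThrough M hC p).choose_spec.1.1

lemma passesThrough_circuitThrough (p : Z × Fin 3) :
    PassesThrough e op (circuitThrough M hC p) p.1 p.2 :=
  (existsUnique_passesThrough M hC p).choose_spec.1.2

lemma eq_circuitThrough {K : H.Subgraph} (hK : K ∈ C) {p : Z × Fin 3}
    (h : PassesThrough e op K p.1 p.2) : K = circuitThrough M hC p :=
  (existsUnique_passesThrough M hC p).choose_spec.2 K ⟨hK, h⟩

lemma circuitThrough_injective (x : Z) : Function.Injective fun c ↦ circuitThrough M hC (x, c) := by
  intro c c' h
  have hc := passesThrough_circuitThrough M hC (x, c)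
  rw [show circuitThrough M hC (x, c) = circuitThrough M hC (x, c') from h] at hc
  exact hc.unique (passesThrough_circuitThrough M hC (x, c'))

lemma circuitThrough_cornerAt_injective (d : Z × Fin 3) :
    Function.Injective fun b ↦ circuitThrough M hC (d.1, cornerAt d.2 b) :=
  (circuitThrough_injective M hC d.1).comp (cornerAt_injective d.2)

lemma exists_circuitThrough_op (d : Z × Fin 3) (b : Bool) :
    ∃ b', circuitThrough M hC ((op d).1, cornerAt (op d).2 b) =
      circuitThrough M hC (d.1, cornerAt d.2 b') := by
  set K := circuitThrough M hC ((op d).1, cornerAt (op d).2 b)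
  have hK : K ∈ C := circuitThrough_mem M hC _
  have hadj : K.Adj (e d.1) (e (op d).1) := by
    have hK_op := (passesThrough_circuitThrough M hC ((op d).1, cornerAt (op d).2 b) (op d).2).2
      (ne_cornerAt _ _)
    simp only [Prod.mk.eta, M.involutive d] at hK_op
    exact hK_op.symm
  obtain ⟨c, hc⟩ := exists_passesThrough M ((hC.1 K hK).2 _ (K.edge_vert hadj))
  obtain ⟨b', rfl⟩ := exists_cornerAt_eq ((hc d.2).1 hadj)
  exact ⟨b', eq_circuitThrough M hC hK hc⟩

open scoped Classical in
/-- The bit of a dart in a circuit double cover: whether the circuits of the cover join the two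
`false` corners along its edge or cross over. -/
noncomputable def coverBit (d : Z × Fin 3) : Bool :=
  decide (circuitThrough M hC (d.1, cornerAt d.2 false) ≠
    circuitThrough M hC ((op d).1, cornerAt (op d).2 false))

lemma coverBit_op (d : Z × Fin 3) : coverBit M hC (op d) = coverBit M hC d := by
  simp only [coverBit, M.involutive d, decide_eq_decide]
  exact ne_comm

lemma apply_eq_apply_xor {α : Type*} [DecidableEq α] {f g : Bool → α} (hg : g.Injective)
    (h : ∀ b, ∃ b', g b = f b') (b : Bool) :
    f b = g (b ^^ decide (f false ≠ g false)) := by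
  have hg' : g false ≠ g true := hg.ne (by decide)
  have h₀ := h false
  have h₁ := h true
  rw [Bool.exists_bool] at h₀ h₁
  by_cases heq : f false = g false <;> cases b <;> simp [heq] <;> grind

lemma circuitThrough_link (x : Z) (y : Fin 3) (b : Bool) :
    circuitThrough M hC (x, cornerAt y b) =
      circuitThrough M hC ((op (x, y)).1, cornerAt (op (x, y)).2 (b ^^ coverBit M hC (x, y))) := by
  classical
  have h := apply_eq_apply_xor (circuitThrough_cornerAt_injective M hC (op (x, y)))
    (exists_circuitThrough_op M hC (x, y)) b
  rw [coverBit]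
  convert h

lemma circuitThrough_congr {p q : Z × Fin 3} (h : CornerEquiv op (coverBit M hC) p q) :
    circuitThrough M hC p = circuitThrough M hC q :=
  h.map_eq (circuitThrough_link M hC)

lemma isSimple_coverBit : IsSimple op (coverBit M hC) :=
  fun x _ _ h ↦ circuitThrough_injective M hC x (circuitThrough_congr M hC h)

lemma passesThrough_circuitThrough_of_cornerEquiv {x : Z} {c : Fin 3} {p : Z × Fin 3}
    (h : CornerEquiv op (coverBit M hC) (x, c) p) :
    PassesThrough e op (circuitThrough M hC p) x c := by
  rw [← circuitThrough_congr M hC h]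
  exact passesThrough_circuitThrough M hC (x, c)

lemma exists_cornerEquiv_of_reachable {p : Z × Fin 3} {w w' : (circuitThrough M hC p).verts}
    (hww' : (circuitThrough M hC p).coe.Reachable w w')
    (hw : ∃ c, CornerEquiv op (coverBit M hC) (e.symm w, c) p) :
    ∃ c, CornerEquiv op (coverBit M hC) (e.symm w', c) p := by
  obtain ⟨walk⟩ := hww'
  induction walk with
  | nil => exact hw
  | @cons w₁ w₂ _ hadj _ ih =>
    apply ih
    obtain ⟨c, hc⟩ := hw
    rw [Subgraph.coe_adj] at hadj
    obtain ⟨y, hy⟩ := (M.adj_iff (e.symm w₁) (e.symm w₂)).1 (by simpa using hadj.adj_sub)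
    have hyc := (passesThrough_circuitThrough_of_cornerEquiv M hC hc y).1
      (by simpa [hy] using hadj)
    obtain ⟨b, rfl⟩ := exists_cornerAt_eq hyc
    exact ⟨_, hy ▸ (CornerEquiv.link (β := coverBit M hC) (e.symm w₁) y b).symm.trans hc⟩

lemma mem_verts_circuitThrough {p : Z × Fin 3} {x : Z} :
    e x ∈ (circuitThrough M hC p).verts ↔ ∃ c, CornerEquiv op (coverBit M hC) (x, c) p := by
  constructor
  · intro hx
    have hp := (passesThrough_circuitThrough M hC p).mem_verts
    have hreach := (hC.1 _ (circuitThrough_mem M hC p)).1.preconnected.coe ⟨e p.1, hp⟩ ⟨e x, hx⟩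
    simpa using exists_cornerEquiv_of_reachable M hC hreach
      ⟨p.2, by simpa using CornerEquiv.refl p⟩
  · rintro ⟨c, hc⟩
    exact (passesThrough_circuitThrough_of_cornerEquiv M hC hc).mem_verts

lemma trace_coverBit (p : Z × Fin 3) : trace M (coverBit M hC) p = circuitThrough M hC p := by
  ext w w'
  · obtain ⟨x, rfl⟩ := e.surjective w
    rw [mem_verts_trace, mem_verts_circuitThrough]
  · obtain ⟨x, rfl⟩ := e.surjective w
    obtain ⟨x', rfl⟩ := e.surjective w'
    by_cases hadj : H.Adj (e x) (e x')
    · obtain ⟨y, rfl⟩ := (M.adj_iff x x').1 hadj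
      rw [trace_adj_op]
      constructor
      · rintro ⟨c, hc, hy⟩
        exact (passesThrough_circuitThrough_of_cornerEquiv M hC hc y).2 hy
      · intro h
        obtain ⟨c, hc⟩ := (mem_verts_circuitThrough M hC).1 (Subgraph.edge_vert _ h)
        exact ⟨c, hc, (passesThrough_circuitThrough_of_cornerEquiv M hC hc y).1 h⟩
    · exact iff_of_false (fun h ↦ hadj h.adj_sub) (fun h ↦ hadj h.adj_sub)

lemma traceCover_coverBit [Finite Z] : traceCover M (coverBit M hC) = C := by
  have hnodup : (traceCover M (coverBit M hC)).Nodup := Finset.nodup _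
  rw [hnodup.ext (nodup_of_isCiDC M hC)]
  intro K
  simp only [mem_traceCover M, trace_coverBit]
  constructor
  · rintro ⟨p, rfl⟩
    exact circuitThrough_mem M hC p
  · intro hK
    obtain ⟨p, hp⟩ := exists_corner_of_mem M hC hK
    exact ⟨p, (eq_circuitThrough M hC hK hp).symm⟩

end

theorem nu_eq_ncard_isSimple [Finite Z] (M : IsDartModel H e op) :
    nu H = {β : Z × Fin 3 → Bool | (∀ d, β (op d) = β d) ∧ IsSimple op β}.ncard := by
  rw [nu, ← Set.InjOn.ncard_image (f := traceCover M)]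
  · congr 1
    ext C
    constructor
    · intro hC
      exact ⟨coverBit M hC, ⟨coverBit_op M hC, isSimple_coverBit M hC⟩, traceCover_coverBit M hC⟩
    · rintro ⟨β, ⟨-, hβ⟩, rfl⟩
      exact isCiDC_traceCover M hβ
  · rintro β ⟨-, hβ⟩ β' ⟨-, hβ'⟩ h
    exact eq_of_traceCover_eq M hβ hβ' h

end CoverBit

/-! ### Gluing an inner piece to an outer piece along ports -/

section Glue

variable {ι O J : Type*}

/-- The dart `y` of an outer vertex, in a glued system with inner vertices `J`. -/
def outerDart (J : Type*) (d : O × Fin 3) : (O ⊕ J) × Fin 3 := (Sum.inl d.1, d.2)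

/-- The darts touched by the wiring of an inner piece: the ports of the outer piece and all
darts of the inner vertices. -/
def wiredDart (port : ι → O × Fin 3) : ι ⊕ J × Fin 3 → (O ⊕ J) × Fin 3
  | Sum.inl i => outerDart J (port i)
  | Sum.inr w => (Sum.inr w.1, w.2)

/-- Opposite darts after gluing: outer darts other than ports keep their partners under `opo`, and
the wired darts are paired by `q`. -/
noncomputable def glueOp (port : ι → O × Fin 3) (opo : O × Fin 3 → O × Fin 3)
    (q : ι ⊕ J × Fin 3 → ι ⊕ J × Fin 3) : (O ⊕ J) × Fin 3 → (O ⊕ J) × Fin 3 :=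
  Function.extend (wiredDart port) (wiredDart port ∘ q)
    fun d ↦ d.1.elim (fun x ↦ outerDart J (opo (x, d.2))) fun _ ↦ d

/-- The bit function of a glued system with bits `βo` outside and `γ` on the wired darts. -/
noncomputable def glueBit (port : ι → O × Fin 3) (βo : O × Fin 3 → Bool)
    (γ : ι ⊕ J × Fin 3 → Bool) : (O ⊕ J) × Fin 3 → Bool :=
  Function.extend (wiredDart port) γ fun d ↦ d.1.elim (fun x ↦ βo (x, d.2)) fun _ ↦ false

/-- An outer piece: the darts fixed by `opo` are the ports, which still await a partner. -/
structure IsOuterPiece (port : ι → O × Fin 3) (opo : O × Fin 3 → O × Fin 3) : Prop where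
  injective : Function.Injective port
  involutive : Function.Involutive opo
  fixed_iff : ∀ d, opo d = d ↔ d ∈ Set.range port

/-- Symmetric bit functions of an outer piece. The bit of a port belongs to the wiring, so it is
normalised to `false` here. -/
abbrev OuterBit (port : ι → O × Fin 3) (opo : O × Fin 3 → O × Fin 3) : Type _ :=
  {βo : O × Fin 3 → Bool // (∀ d, βo (opo d) = βo d) ∧ ∀ i, βo (port i) = false}

variable {port : ι → O × Fin 3} {opo : O × Fin 3 → O × Fin 3} {βo : O × Fin 3 → Bool}
  {q : ι ⊕ J × Fin 3 → ι ⊕ J × Fin 3} {γ : ι ⊕ J × Fin 3 → Bool}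

lemma wiredDart_injective (hport : Function.Injective port) :
    Function.Injective (wiredDart (J := J) port) := by
  rintro (i | ⟨z, c⟩) (i' | ⟨z', c'⟩) h
  · simp only [wiredDart, outerDart, Prod.mk.injEq, Sum.inl.injEq] at h
    rw [hport (Prod.ext h.1 h.2)]
  · simp [wiredDart, outerDart] at h
  · simp [wiredDart, outerDart] at h
  · simpa [wiredDart] using h

lemma outerDart_ne_wiredDart {d : O × Fin 3} (hd : d ∉ Set.range port) :
    ¬ ∃ w, wiredDart (J := J) port w = outerDart J d := by
  rintro ⟨i | ⟨z, c⟩, h⟩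
  · simp only [wiredDart, outerDart, Prod.mk.injEq, Sum.inl.injEq] at h
    exact hd ⟨i, Prod.ext h.1 h.2⟩
  · simp [wiredDart, outerDart] at h

lemma wiredDart_or_outerDart (port : ι → O × Fin 3) (d : (O ⊕ J) × Fin 3) :
    (∃ w, d = wiredDart port w) ∨ ∃ d₀ ∉ Set.range port, d = outerDart J d₀ := by
  obtain ⟨x | z, y⟩ := d
  · by_cases h : (x, y) ∈ Set.range port
    · obtain ⟨i, hi⟩ := h
      exact Or.inl ⟨Sum.inl i, by rw [wiredDart, hi, outerDart]⟩
    · exact Or.inr ⟨(x, y), h, rfl⟩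
  · exact Or.inl ⟨Sum.inr (z, y), rfl⟩

lemma glueOp_wiredDart (hport : Function.Injective port) (w : ι ⊕ J × Fin 3) :
    glueOp port opo q (wiredDart port w) = wiredDart port (q w) :=
  (wiredDart_injective hport).extend_apply _ _ w

lemma glueBit_wiredDart (hport : Function.Injective port) (w : ι ⊕ J × Fin 3) :
    glueBit port βo γ (wiredDart port w) = γ w :=
  (wiredDart_injective hport).extend_apply _ _ w

lemma glueOp_outerDart {d : O × Fin 3} (hd : d ∉ Set.range port) :
    glueOp port opo q (outerDart J d) = outerDart J (opo d) :=
  Function.extend_apply' _ _ _ (outerDart_ne_wiredDart hd)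

lemma glueBit_outerDart {d : O × Fin 3} (hd : d ∉ Set.range port) :
    glueBit port βo γ (outerDart J d) = βo d :=
  Function.extend_apply' _ _ _ (outerDart_ne_wiredDart hd)

lemma IsOuterPiece.op_notMem_range (hP : IsOuterPiece port opo) {d : O × Fin 3}
    (hd : d ∉ Set.range port) : opo d ∉ Set.range port := by
  rw [← hP.fixed_iff, hP.involutive d]
  exact fun h ↦ hd ((hP.fixed_iff d).1 h.symm)

lemma IsOuterPiece.op_port (hP : IsOuterPiece port opo) (i : ι) : opo (port i) = port i :=
  (hP.fixed_iff _).2 ⟨i, rfl⟩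

lemma glueOp_involutive (hP : IsOuterPiece port opo) (hq : Function.Involutive q) :
    Function.Involutive (glueOp port opo q) := by
  intro d
  obtain ⟨w, rfl⟩ | ⟨d, hd, rfl⟩ := wiredDart_or_outerDart port d
  · rw [glueOp_wiredDart hP.injective, glueOp_wiredDart hP.injective, hq]
  · rw [glueOp_outerDart hd, glueOp_outerDart (hP.op_notMem_range hd), hP.involutive]

lemma glueBit_glueOp_iff (hP : IsOuterPiece port opo) (hβo : ∀ d, βo (opo d) = βo d) :
    (∀ d, glueBit port βo γ (glueOp port opo q d) = glueBit port βo γ d) ↔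
      ∀ w, γ (q w) = γ w := by
  constructor
  · intro h w
    simpa only [glueOp_wiredDart hP.injective, glueBit_wiredDart hP.injective]
      using h (wiredDart port w)
  · intro h d
    obtain ⟨w, rfl⟩ | ⟨d, hd, rfl⟩ := wiredDart_or_outerDart port d
    · simp only [glueOp_wiredDart hP.injective, glueBit_wiredDart hP.injective, h]
    · simp only [glueOp_outerDart hd, glueBit_outerDart hd,
        glueBit_outerDart (hP.op_notMem_range hd), hβo]

/-! ### Simplicity of a glued system -/

/-- The corner on side `s.2` of the port `s.1`. The pair `s` is called a slot. -/
def slotCorner (port : ι → O × Fin 3) (s : ι × Bool) : O × Fin 3 :=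
  ((port s.1).1, cornerAt (port s.1).2 s.2)

/-- Two slots are joined by a walk through the outer piece. -/
def SlotEquiv (port : ι → O × Fin 3) (opo : O × Fin 3 → O × Fin 3) (βo : O × Fin 3 → Bool)
    (s t : ι × Bool) : Prop :=
  CornerEquiv opo βo (slotCorner port s) (slotCorner port t)

/-- The walks into the outer piece from two slots visit a common vertex. -/
def SlotMeet (port : ι → O × Fin 3) (opo : O × Fin 3 → O × Fin 3) (βo : O × Fin 3 → Bool)
    (s t : ι × Bool) : Prop :=
  ∃ x c c', CornerEquiv opo βo (x, c) (slotCorner port s) ∧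
    CornerEquiv opo βo (x, c') (slotCorner port t)

/-- The slot or inner corner on the side `b` of a wired dart. -/
def sideNode : ι ⊕ J × Fin 3 → Bool → (ι × Bool) ⊕ (J × Fin 3)
  | Sum.inl i, b => Sum.inl (i, b)
  | Sum.inr w, b => Sum.inr (w.1, cornerAt w.2 b)

/-- One step of a walk seen from the inside: an excursion through the outer piece, recorded by the
relation `R` between slots, or a passage along a wired edge. -/
inductive NodeLink (R : ι × Bool → ι × Bool → Prop) (q : ι ⊕ J × Fin 3 → ι ⊕ J × Fin 3)
    (γ : ι ⊕ J × Fin 3 → Bool) :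
    (ι × Bool) ⊕ (J × Fin 3) → (ι × Bool) ⊕ (J × Fin 3) → Prop
  | excursion {s t : ι × Bool} : R s t → NodeLink R q γ (Sum.inl s) (Sum.inl t)
  | passage (w : ι ⊕ J × Fin 3) (b : Bool) :
      NodeLink R q γ (sideNode w b) (sideNode (q w) (b ^^ γ w))

/-- The bits `γ` on the wiring `q` create no repeated vertex, given the relations `R` and `M`
between slots of being joined outside and of meeting outside. -/
def IsAdmissible (R M : ι × Bool → ι × Bool → Prop) (q : ι ⊕ J × Fin 3 → ι ⊕ J × Fin 3)
    (γ : ι ⊕ J × Fin 3 → Bool) : Prop :=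
  (∀ z c c', Relation.EqvGen (NodeLink R q γ) (Sum.inr (z, c)) (Sum.inr (z, c')) → c = c') ∧
    ∀ s t, Relation.EqvGen (NodeLink R q γ) (Sum.inl s) (Sum.inl t) → M s t → R s t

/-- The corner of the glued system at a node. -/
def nodeCorner (port : ι → O × Fin 3) : (ι × Bool) ⊕ (J × Fin 3) → (O ⊕ J) × Fin 3
  | Sum.inl s => outerDart J (slotCorner port s)
  | Sum.inr w => (Sum.inr w.1, w.2)

lemma nodeCorner_sideNode (w : ι ⊕ J × Fin 3) (b : Bool) :
    nodeCorner port (sideNode w b) =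
      ((wiredDart port w).1, cornerAt (wiredDart port w).2 b) := by
  cases w <;> rfl

lemma CornerEquiv.glue (hP : IsOuterPiece port opo) (hβo : ∀ i, βo (port i) = false)
    {p p' : O × Fin 3} (h : CornerEquiv opo βo p p') :
    CornerEquiv (glueOp port opo q) (glueBit port βo γ) (outerDart J p) (outerDart J p') := by
  induction h with
  | rel p p' hlink =>
    obtain ⟨x, y, b, rfl, rfl⟩ := hlink
    by_cases hxy : (x, y) ∈ Set.range port
    · obtain ⟨i, hi⟩ := hxy
      rw [← hi, hP.op_port, hβo, hi, Bool.xor_false]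
      exact CornerEquiv.refl _
    · have hlink := CornerEquiv.link (op := glueOp port opo q) (β := glueBit port βo γ)
        (Sum.inl x) y b
      rw [show (Sum.inl x, y) = outerDart J (x, y) from rfl, glueOp_outerDart hxy,
        glueBit_outerDart hxy] at hlink
      exact hlink
  | refl p => exact CornerEquiv.refl _
  | symm p p' _ ih => exact ih.symm
  | trans p p' p'' _ _ ih ih' => exact ih.trans ih'

lemma cornerEquiv_nodeCorner (hP : IsOuterPiece port opo) (hβo : ∀ i, βo (port i) = false)
    {n n' : (ι × Bool) ⊕ (J × Fin 3)}
    (h : Relation.EqvGen (NodeLink (SlotEquiv port opo βo) q γ) n n') :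
    CornerEquiv (glueOp port opo q) (glueBit port βo γ) (nodeCorner port n)
      (nodeCorner port n') := by
  induction h with
  | rel n n' hlink =>
    cases hlink with
    | excursion hst => exact CornerEquiv.glue hP hβo hst
    | passage w b =>
      have hlink := CornerEquiv.link (op := glueOp port opo q) (β := glueBit port βo γ)
        (wiredDart port w).1 (wiredDart port w).2 b
      rw [Prod.mk.eta, glueOp_wiredDart hP.injective, glueBit_wiredDart hP.injective] at hlink
      simpa only [nodeCorner_sideNode] using hlink
  | refl n => exact CornerEquiv.refl _
  | symm n n' _ ih => exact ih.symm
  | trans n n' n'' _ _ ih ih' => exact ih.trans ih'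

/-- The node `n` lies on the excursion of the corner `p`, or is the inner corner `p`. -/
def IsNodeOf (port : ι → O × Fin 3) (opo : O × Fin 3 → O × Fin 3) (βo : O × Fin 3 → Bool) :
    (ι × Bool) ⊕ (J × Fin 3) → (O ⊕ J) × Fin 3 → Prop
  | Sum.inl s, p => ∃ p₀, p = outerDart J p₀ ∧ CornerEquiv opo βo p₀ (slotCorner port s)
  | Sum.inr w, p => p = (Sum.inr w.1, w.2)

lemma isNodeOf_nodeCorner (n : (ι × Bool) ⊕ (J × Fin 3)) :
    IsNodeOf port opo βo n (nodeCorner port n) := by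
  cases n with
  | inl s => exact ⟨_, rfl, CornerEquiv.refl _⟩
  | inr w => rfl

lemma outerDart_injective : Function.Injective (outerDart (O := O) J) := fun d d' h ↦ by
  simp only [outerDart, Prod.mk.injEq, Sum.inl.injEq] at h
  exact Prod.ext h.1 h.2

lemma IsNodeOf.congr_outer {n : (ι × Bool) ⊕ (J × Fin 3)} {p p' : O × Fin 3}
    (h : IsNodeOf port opo βo n (outerDart J p)) (hp : CornerEquiv opo βo p' p) :
    IsNodeOf port opo βo n (outerDart J p') := by
  cases n with
  | inl s =>
    obtain ⟨p₀, hp₀, hs⟩ := h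
    obtain rfl := outerDart_injective hp₀
    exact ⟨p', rfl, hp.trans hs⟩
  | inr w => simp [IsNodeOf, outerDart] at h

lemma IsNodeOf.nodeEquiv {n n' : (ι × Bool) ⊕ (J × Fin 3)} {p : (O ⊕ J) × Fin 3}
    (h : IsNodeOf port opo βo n p) (h' : IsNodeOf port opo βo n' p) :
    Relation.EqvGen (NodeLink (SlotEquiv port opo βo) q γ) n n' := by
  rcases n with s | w <;> rcases n' with s' | w'
  · obtain ⟨p₀, rfl, hs⟩ := h
    obtain ⟨p₁, hp₁, hs'⟩ := h'
    obtain rfl := outerDart_injective hp₁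
    exact .rel _ _ (.excursion (hs.symm.trans hs'))
  · obtain ⟨p₀, rfl, -⟩ := h
    simp [IsNodeOf, outerDart] at h'
  · obtain ⟨p₀, rfl, -⟩ := h'
    simp [IsNodeOf, outerDart] at h
  · have hww' := h.symm.trans h'
    simp only [Prod.mk.injEq, Sum.inr.injEq] at hww'
    rw [Prod.ext hww'.1 hww'.2]
    exact .refl _

/-- Two corners of the glued system are joined by a walk staying outside, or by a walk that is
visible at the nodes. -/
def IsJoined (port : ι → O × Fin 3) (opo : O × Fin 3 → O × Fin 3) (βo : O × Fin 3 → Bool)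
    (q : ι ⊕ J × Fin 3 → ι ⊕ J × Fin 3) (γ : ι ⊕ J × Fin 3 → Bool) (p p' : (O ⊕ J) × Fin 3) :
    Prop :=
  (∃ p₀ p₀', p = outerDart J p₀ ∧ p' = outerDart J p₀' ∧ CornerEquiv opo βo p₀ p₀') ∨
    ∃ n n', IsNodeOf port opo βo n p ∧ IsNodeOf port opo βo n' p' ∧
      Relation.EqvGen (NodeLink (SlotEquiv port opo βo) q γ) n n'

lemma IsJoined.symm {p p' : (O ⊕ J) × Fin 3} (h : IsJoined port opo βo q γ p p') :
    IsJoined port opo βo q γ p' p := by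
  obtain ⟨p₀, p₀', hp, hp', h⟩ | ⟨n, n', hn, hn', h⟩ := h
  · exact Or.inl ⟨p₀', p₀, hp', hp, h.symm⟩
  · exact Or.inr ⟨n', n, hn', hn, .symm _ _ h⟩

lemma IsJoined.trans {p p' p'' : (O ⊕ J) × Fin 3} (h : IsJoined port opo βo q γ p p')
    (h' : IsJoined port opo βo q γ p' p'') : IsJoined port opo βo q γ p p'' := by
  obtain ⟨p₀, p₁, rfl, rfl, h₀₁⟩ | ⟨n₀, n₁, hn₀, hn₁, h₀₁⟩ := h <;>
    obtain ⟨p₂, p₃, hp₂, rfl, h₂₃⟩ | ⟨n₂, n₃, hn₂, hn₃, h₂₃⟩ := h'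
  · obtain rfl := outerDart_injective hp₂
    exact Or.inl ⟨_, _, rfl, rfl, h₀₁.trans h₂₃⟩
  · exact Or.inr ⟨n₂, n₃, hn₂.congr_outer h₀₁, hn₃, h₂₃⟩
  · subst hp₂
    exact Or.inr ⟨n₀, n₁, hn₀, hn₁.congr_outer h₂₃.symm, h₀₁⟩
  · exact Or.inr ⟨n₀, n₃, hn₀, hn₃, .trans _ _ _ h₀₁ (.trans _ _ _ (hn₁.nodeEquiv hn₂) h₂₃)⟩

lemma isJoined_of_cornerEquiv (hP : IsOuterPiece port opo) {p p' : (O ⊕ J) × Fin 3}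
    (h : CornerEquiv (glueOp port opo q) (glueBit port βo γ) p p') :
    IsJoined port opo βo q γ p p' := by
  induction h with
  | rel p p' hlink =>
    obtain ⟨x, y, b, rfl, rfl⟩ := hlink
    obtain ⟨w, hw⟩ | ⟨d, hd, hxy⟩ := wiredDart_or_outerDart port (x, y)
    · rw [hw, glueOp_wiredDart hP.injective, glueBit_wiredDart hP.injective,
        ← nodeCorner_sideNode, show (x, cornerAt y b) = nodeCorner port (sideNode w b) by
          rw [nodeCorner_sideNode, ← hw]]
      exact Or.inr ⟨_, _, isNodeOf_nodeCorner _, isNodeOf_nodeCorner _,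
        .rel _ _ (.passage w b)⟩
    · rw [hxy, glueOp_outerDart hd, glueBit_outerDart hd]
      obtain ⟨rfl, rfl⟩ := Prod.mk.injEq .. ▸ hxy
      exact Or.inl ⟨_, _, rfl, rfl, CornerEquiv.link _ _ _⟩
  | refl p =>
    obtain ⟨x | z, c⟩ := p
    · exact Or.inl ⟨(x, c), (x, c), rfl, rfl, CornerEquiv.refl _⟩
    · exact Or.inr ⟨Sum.inr (z, c), Sum.inr (z, c), rfl, rfl, .refl _⟩
  | symm p p' _ ih => exact ih.symm
  | trans p p' p'' _ _ ih ih' => exact ih.trans ih'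

lemma isSimple_glue_of_isAdmissible (hP : IsOuterPiece port opo) (hβo : IsSimple opo βo)
    (hγ : IsAdmissible (SlotEquiv port opo βo) (SlotMeet port opo βo) q γ) :
    IsSimple (glueOp port opo q) (glueBit port βo γ) := by
  rintro (x | z) c c' h <;>
    obtain ⟨⟨x₀, c₀⟩, ⟨x₁, c₁⟩, hp₀, hp₁, h⟩ | ⟨n, n', hn, hn', hnn'⟩ :=
      isJoined_of_cornerEquiv hP h
  · simp only [outerDart, Prod.mk.injEq, Sum.inl.injEq] at hp₀ hp₁
    obtain ⟨rfl, rfl⟩ := hp₀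
    obtain ⟨rfl, rfl⟩ := hp₁
    exact hβo _ _ _ h
  · rcases n with s | w <;> rcases n' with s' | w' <;> simp only [IsNodeOf, outerDart,
      Prod.mk.injEq, Sum.inl.injEq, reduceCtorEq, false_and] at hn hn'
    obtain ⟨p₀, ⟨rfl, rfl⟩, hs⟩ := hn
    obtain ⟨⟨_, c'⟩, ⟨rfl, rfl⟩, hs'⟩ := hn'
    have hss' := hγ.2 s s' hnn' ⟨_, _, _, hs, hs'⟩
    exact hβo _ _ _ (hs.trans (hss'.trans hs'.symm))
  · simp [outerDart] at hp₀
  · rcases n with s | w <;> rcases n' with s' | w' <;> simp only [IsNodeOf, outerDart,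
      Prod.mk.injEq, Sum.inr.injEq, reduceCtorEq, false_and, exists_false] at hn hn'
    obtain ⟨rfl, rfl⟩ := hn
    obtain ⟨hz, rfl⟩ := hn'
    exact hγ.1 w.1 _ _ (by rw [Prod.mk.eta, hz]; exact hnn')

lemma isAdmissible_of_isSimple_glue (hP : IsOuterPiece port opo)
    (hport : ∀ i, βo (port i) = false) (h : IsSimple (glueOp port opo q) (glueBit port βo γ)) :
    IsAdmissible (SlotEquiv port opo βo) (SlotMeet port opo βo) q γ := by
  refine ⟨fun z c c' hcc' ↦ h _ _ _ (cornerEquiv_nodeCorner hP hport hcc'), ?_⟩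
  rintro s t hst ⟨x, c, c', hs, ht⟩
  obtain rfl : c = c' := h (Sum.inl x) _ _ ((CornerEquiv.glue hP hport hs).trans
    ((cornerEquiv_nodeCorner hP hport hst).trans (CornerEquiv.glue hP hport ht).symm))
  exact hs.symm.trans ht

theorem isSimple_glue_iff (hP : IsOuterPiece port opo) (hport : ∀ i, βo (port i) = false) :
    IsSimple (glueOp port opo q) (glueBit port βo γ) ↔ IsSimple opo βo ∧
      IsAdmissible (SlotEquiv port opo βo) (SlotMeet port opo βo) q γ :=
  ⟨fun h ↦ ⟨fun x _ _ hcc' ↦ h (Sum.inl x) _ _ (CornerEquiv.glue hP hport hcc'),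
    isAdmissible_of_isSimple_glue hP hport h⟩,
    fun ⟨hβo, hγ⟩ ↦ isSimple_glue_of_isAdmissible hP hβo hγ⟩

/-- The symmetric bit functions on a wiring `q` that create no repeated vertex. -/
def admissibleBits (R M : ι × Bool → ι × Bool → Prop) (q : ι ⊕ J × Fin 3 → ι ⊕ J × Fin 3) :
    Set (ι ⊕ J × Fin 3 → Bool) :=
  {γ | (∀ w, γ (q w) = γ w) ∧ IsAdmissible R M q γ}

lemma glueBit_injective (hport : Function.Injective port) :
    Function.Injective fun p : OuterBit port opo × (ι ⊕ J × Fin 3 → Bool) ↦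
      glueBit port p.1.1 p.2 := by
  rintro ⟨⟨βo, hβo⟩, γ⟩ ⟨⟨βo', hβo'⟩, γ'⟩ h
  simp only [Prod.mk.injEq, Subtype.mk.injEq]
  constructor
  · funext d
    by_cases hd : d ∈ Set.range port
    · obtain ⟨i, rfl⟩ := hd
      rw [hβo.2, hβo'.2]
    · simpa only [glueBit_outerDart hd] using congrFun h (outerDart J d)
  · funext w
    simpa only [glueBit_wiredDart hport] using congrFun h (wiredDart port w)

lemma exists_glueBit_eq (hP : IsOuterPiece port opo) {β : (O ⊕ J) × Fin 3 → Bool}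
    (hβ : ∀ d, β (glueOp port opo q d) = β d) :
    ∃ (βo : OuterBit port opo) (γ : ι ⊕ J × Fin 3 → Bool), glueBit port βo.1 γ = β := by
  classical
  let βo : O × Fin 3 → Bool := fun d ↦ if d ∈ Set.range port then false else β (outerDart J d)
  have hβo_sym : ∀ d, βo (opo d) = βo d := fun d ↦ by
    by_cases hd : d ∈ Set.range port
    · rw [(hP.fixed_iff d).2 hd]
    · simp only [βo, if_neg hd, if_neg (hP.op_notMem_range hd)]
      rw [← hβ (outerDart J d), glueOp_outerDart hd]
  refine ⟨⟨βo, hβo_sym, fun i ↦ if_pos ⟨i, rfl⟩⟩, β ∘ wiredDart port, ?_⟩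
  funext d
  obtain ⟨w, rfl⟩ | ⟨d, hd, rfl⟩ := wiredDart_or_outerDart port d
  · rw [glueBit_wiredDart hP.injective, Function.comp_apply]
  · rw [glueBit_outerDart hd]
    exact if_neg hd

lemma glueBit_mem_iff (hP : IsOuterPiece port opo) (βo : OuterBit port opo) :
    ((∀ d, glueBit port βo.1 γ (glueOp port opo q d) = glueBit port βo.1 γ d) ∧
      IsSimple (glueOp port opo q) (glueBit port βo.1 γ)) ↔ IsSimple opo βo.1 ∧
      γ ∈ admissibleBits (SlotEquiv port opo βo.1) (SlotMeet port opo βo.1) q := by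
  rw [glueBit_glueOp_iff hP βo.2.1, isSimple_glue_iff hP βo.2.2]
  exact and_left_comm

theorem ncard_isSimple_glue [Finite ι] [Finite J] [Fintype (OuterBit port opo)]
    (hP : IsOuterPiece port opo) :
    {β | (∀ d, β (glueOp port opo q d) = β d) ∧ IsSimple (glueOp port opo q) β}.ncard =
      ∑ βo : OuterBit port opo, {γ | IsSimple opo βo.1 ∧
        γ ∈ admissibleBits (SlotEquiv port opo βo.1) (SlotMeet port opo βo.1) q}.ncard := by
  let T : OuterBit port opo → Set (ι ⊕ J × Fin 3 → Bool) := fun βo ↦ {γ | IsSimple opo βo.1 ∧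
    γ ∈ admissibleBits (SlotEquiv port opo βo.1) (SlotMeet port opo βo.1) q}
  let F : (Σ βo : OuterBit port opo, T βo) → (O ⊕ J) × Fin 3 → Bool :=
    fun p ↦ glueBit port p.1.1 p.2.1
  have hF : Function.Injective F := by
    rintro ⟨βo, γ, hγ⟩ ⟨βo', γ', hγ'⟩ h
    obtain ⟨rfl, rfl⟩ := Prod.mk.inj (glueBit_injective hP.injective
      (a₁ := (βo, γ)) (a₂ := (βo', γ')) h)
    rfl
  have hrange : {β | (∀ d, β (glueOp port opo q d) = β d) ∧
      IsSimple (glueOp port opo q) β} = Set.range F := by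
    ext β
    constructor
    · intro hβ
      obtain ⟨βo, γ, rfl⟩ := exists_glueBit_eq hP hβ.1
      exact ⟨⟨βo, γ, (glueBit_mem_iff hP βo).1 hβ⟩, rfl⟩
    · rintro ⟨⟨βo, γ, hγ⟩, rfl⟩
      exact (glueBit_mem_iff hP βo).2 hγ
  rw [hrange, ← Nat.card_coe_set_eq, Nat.card_range_of_injective hF, Nat.card_sigma]
  exact Finset.sum_congr rfl fun βo _ ↦ Nat.card_coe_set_eq (T βo)

end Glue

/-! ### Pairs of involutions -/

section Involutions

open Equiv

variable {F : Type*} {r τ : Perm F}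

lemma involution_zpow_left (hr : r * r = 1) (hτ : τ * τ = 1) (k : ℤ) :
    r * (r * τ) ^ k = (r * τ) ^ (-k) * r := by
  have hconj : SemiconjBy r (r * τ) (r * τ)⁻¹ := by
    rw [SemiconjBy, mul_inv_rev, inv_eq_of_mul_eq_one_right hr, inv_eq_of_mul_eq_one_right hτ,
      ← mul_assoc, hr, one_mul, mul_assoc, hr, mul_one]
  simpa only [inv_zpow', SemiconjBy] using hconj.zpow_right k

lemma involution_left_zpow_apply (hr : r * r = 1) (hτ : τ * τ = 1) {p : F} (hp : τ p = p)
    (k : ℤ) : r (((r * τ) ^ k) p) = ((r * τ) ^ (1 - k)) p := by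
  have hrp : r p = (r * τ) p := by rw [Perm.mul_apply, hp]
  rw [← Perm.mul_apply, involution_zpow_left hr hτ, Perm.mul_apply, hrp, ← Perm.mul_apply,
    ← zpow_add_one, neg_add_eq_sub]

lemma involution_right_zpow_apply (hr : r * r = 1) (hτ : τ * τ = 1) {p : F} (hp : τ p = p)
    (k : ℤ) : τ (((r * τ) ^ k) p) = ((r * τ) ^ (-k)) p := by
  have hτr : τ = r * (r * τ) ^ (1 : ℤ) := by rw [zpow_one, ← mul_assoc, hr, one_mul]
  conv_lhs => rw [hτr]
  rw [Perm.mul_apply, ← hτr, ← Perm.mul_apply ((r * τ) ^ (1 : ℤ)), ← zpow_add,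
    involution_left_zpow_apply hr hτ hp]
  congr 2
  ring

-- The orbit is a path: reflecting a cycle of odd length would give `r` a fixed point, and
-- reflecting a cycle of even length through a vertex fixes the opposite vertex as well.
lemma exists_sameCycle_fixed_iff [Finite F] (hr : r * r = 1) (hτ : τ * τ = 1)
    (hr_ne : ∀ f, r f ≠ f) {p : F} (hp : τ p = p) :
    ∃ p' ≠ p, ∀ f, (τ f = f ∧ (r * τ).SameCycle p f) ↔ f = p ∨ f = p' := by
  let n := Function.minimalPeriod (fun f ↦ (r * τ) • f) p
  have hpow (k l : ℤ) : ((r * τ) ^ k) p = ((r * τ) ^ l) p ↔ (n : ℤ) ∣ k - l := by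
    rw [show (n : ℤ) ∣ k - l ↔ _ from MulAction.zpow_smul_eq_iff_minimalPeriod_dvd.symm,
      Perm.smul_def, sub_eq_neg_add, zpow_add,
      Perm.mul_apply, zpow_neg, Perm.inv_eq_iff_eq, eq_comm]
  have hn : 0 < n := Function.minimalPeriod_pos_of_mem_periodicPts
    ((r * τ).injective.mem_periodicPts p)
  have hfix (k : ℤ) : τ (((r * τ) ^ k) p) = ((r * τ) ^ k) p ↔ (n : ℤ) ∣ 2 * k := by
    rw [involution_right_zpow_apply hr hτ hp, eq_comm, hpow, sub_neg_eq_add, two_mul]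
  obtain ⟨h, hnh | hnh⟩ := n.even_or_odd'
  · refine ⟨((r * τ) ^ (h : ℤ)) p, fun hh ↦ ?_, fun f ↦ ⟨?_, ?_⟩⟩
    · have hdvd := (hpow h 0).1 hh
      rw [sub_zero, Int.natCast_dvd_natCast] at hdvd
      have := Nat.le_of_dvd (by omega) hdvd
      omega
    · rintro ⟨hf, k, rfl⟩
      obtain ⟨m, hm⟩ := (hfix k).1 hf
      rw [hnh, Nat.cast_mul, Nat.cast_ofNat, mul_assoc] at hm
      obtain ⟨t, rfl | rfl⟩ := m.even_or_odd'
      · exact Or.inl ((hpow k 0).2 ⟨t, by rw [hnh]; push_cast; linarith⟩)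
      · exact Or.inr ((hpow k h).2 ⟨t, by rw [hnh]; push_cast; linarith⟩)
    · rintro (rfl | rfl)
      · exact ⟨hp, .refl _ _⟩
      · exact ⟨(hfix h).2 ⟨1, by rw [hnh]; push_cast; ring⟩, h, rfl⟩
  · refine absurd ?_ (hr_ne (((r * τ) ^ (h + 1 : ℤ)) p))
    rw [involution_left_zpow_apply hr hτ hp, hpow]
    exact ⟨-1, by rw [hnh]; push_cast; ring⟩

lemma sameCycle_left (hr : r * r = 1) (hτ : τ * τ = 1) {p f : F} (hp : τ p = p)
    (h : (r * τ).SameCycle p f) : (r * τ).SameCycle p (r f) := by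
  obtain ⟨k, rfl⟩ := h
  exact ⟨1 - k, (involution_left_zpow_apply hr hτ hp k).symm⟩

lemma sameCycle_right (hr : r * r = 1) (hτ : τ * τ = 1) {p f : F} (hp : τ p = p)
    (h : (r * τ).SameCycle p f) : (r * τ).SameCycle p (τ f) := by
  obtain ⟨k, rfl⟩ := h
  exact ⟨-k, (involution_right_zpow_apply hr hτ hp k).symm⟩

end Involutions

/-! ### Walks through the outer piece -/

section Slots

variable {ι O : Type*} {port : ι → O × Fin 3} {opo : O × Fin 3 → O × Fin 3}
  {βo : O × Fin 3 → Bool}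

/-- A flag is a dart with one of its two sides, that is, a corner with one of its two darts; this
is its corner. -/
def flagCorner (f : (O × Fin 3) × Bool) : O × Fin 3 := (f.1.1, cornerAt f.1.2 f.2)

/-- The other flag with the same corner. -/
def turn (f : (O × Fin 3) × Bool) : (O × Fin 3) × Bool := (flagCorner (f.1, !f.2), !f.2)

/-- The flag at the other end of the edge, on the side followed by the walk. -/
def cross (opo : O × Fin 3 → O × Fin 3) (βo : O × Fin 3 → Bool) (f : (O × Fin 3) × Bool) :
    (O × Fin 3) × Bool := (opo f.1, f.2 ^^ βo f.1)

lemma turn_involutive : Function.Involutive (turn (O := O)) := by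
  rintro ⟨⟨x, y⟩, b⟩
  have h : ∀ (y : Fin 3) (b : Bool), cornerAt (cornerAt y b) (!b) = y := by decide
  simpa [turn, flagCorner] using h y (!b)

lemma turn_ne (f : (O × Fin 3) × Bool) : turn f ≠ f := fun h ↦ by
  simpa [turn] using congrArg Prod.snd h

lemma cross_involutive (hopo : Function.Involutive opo) (hβo : ∀ d, βo (opo d) = βo d) :
    Function.Involutive (cross opo βo) := by
  rintro ⟨d, b⟩
  simp [cross, hopo d, hβo d]

lemma flagCorner_eq_iff {f f' : (O × Fin 3) × Bool} :
    flagCorner f = flagCorner f' ↔ f = f' ∨ f = turn f' := by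
  obtain ⟨⟨x, y⟩, b⟩ := f
  obtain ⟨⟨x', y'⟩, b'⟩ := f'
  have h : ∀ (y y' : Fin 3) (b b' : Bool), cornerAt y b = cornerAt y' b' ↔
      (y = y' ∧ b = b') ∨ (y = cornerAt y' (!b') ∧ b = !b') := by decide
  simp only [flagCorner, turn, Prod.mk.injEq, h]
  tauto

lemma flagCorner_turn (f : (O × Fin 3) × Bool) : flagCorner (turn f) = flagCorner f :=
  flagCorner_eq_iff.2 (Or.inr rfl)

lemma cross_port (hP : IsOuterPiece port opo) (hport : ∀ i, βo (port i) = false)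
    (s : ι × Bool) : cross opo βo (port s.1, s.2) = (port s.1, s.2) := by
  simp [cross, hP.op_port, hport]

lemma exists_port_of_cross_eq (hP : IsOuterPiece port opo) {f : (O × Fin 3) × Bool}
    (hf : cross opo βo f = f) : ∃ s : ι × Bool, f = (port s.1, s.2) := by
  obtain ⟨i, hi⟩ := (hP.fixed_iff f.1).1 (congrArg Prod.fst hf)
  exact ⟨(i, f.2), by rw [hi]⟩

lemma turn_mul_turn : turn_involutive.toPerm * turn_involutive.toPerm =
    (1 : Equiv.Perm ((O × Fin 3) × Bool)) :=
  Equiv.ext turn_involutive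

lemma cross_mul_cross (hcross : Function.Involutive (cross opo βo)) :
    hcross.toPerm * hcross.toPerm = 1 :=
  Equiv.ext hcross

lemma cornerEquiv_of_sameCycle [Finite O] (hcross : Function.Involutive (cross opo βo))
    {f f' : (O × Fin 3) × Bool}
    (h : (turn_involutive.toPerm * hcross.toPerm).SameCycle f f') :
    CornerEquiv opo βo (flagCorner f) (flagCorner f') := by
  obtain ⟨n, rfl⟩ := h.exists_nat_pow_eq
  clear h
  induction n with
  | zero => exact CornerEquiv.refl _
  | succ n ih =>
    refine ih.trans ?_
    rw [pow_succ', Equiv.Perm.mul_apply]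
    generalize (_ : Equiv.Perm ((O × Fin 3) × Bool)) f = f'
    rw [Equiv.Perm.mul_apply, Function.Involutive.coe_toPerm, Function.Involutive.coe_toPerm,
      flagCorner_turn]
    exact CornerEquiv.link _ _ _

lemma exists_sameCycle_of_cornerEquiv (hcross : Function.Involutive (cross opo βo))
    {f : (O × Fin 3) × Bool} (hf : cross opo βo f = f) {p : O × Fin 3}
    (h : CornerEquiv opo βo (flagCorner f) p) :
    ∃ f', (turn_involutive.toPerm * hcross.toPerm).SameCycle f f' ∧ flagCorner f' = p := by
  have hmem (x : O) (y : Fin 3) (b : Bool) : (∃ f',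
      (turn_involutive.toPerm * hcross.toPerm).SameCycle f f' ∧
        flagCorner f' = (x, cornerAt y b)) ↔
      (turn_involutive.toPerm * hcross.toPerm).SameCycle f ((x, y), b) := by
    refine ⟨?_, fun h ↦ ⟨_, h, rfl⟩⟩
    rintro ⟨f', hf', hx⟩
    obtain rfl | rfl := flagCorner_eq_iff.1 (hx.trans (rfl : _ = flagCorner ((x, y), b)))
    · exact hf'
    · have hturn := sameCycle_left turn_mul_turn (cross_mul_cross hcross) hf hf'
      rwa [Function.Involutive.coe_toPerm, turn_involutive] at hturn
  refine (CornerEquiv.map_eq (f := fun p ↦ ∃ f',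
    (turn_involutive.toPerm * hcross.toPerm).SameCycle f f' ∧ flagCorner f' = p)
    (fun x y b ↦ ?_) h).mp ?_
  · rw [eq_iff_iff, hmem, hmem]
    refine ⟨sameCycle_right turn_mul_turn (cross_mul_cross hcross) hf, fun h ↦ ?_⟩
    have hback : Equiv.Perm.SameCycle _ f (cross opo βo (cross opo βo ((x, y), b))) :=
      sameCycle_right turn_mul_turn (cross_mul_cross hcross) hf h
    rwa [hcross] at hback
  · exact ⟨f, .refl _ _, rfl⟩

lemma slotEquiv_iff_sameCycle [Finite O] (hP : IsOuterPiece port opo)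
    (hport : ∀ i, βo (port i) = false) (hcross : Function.Involutive (cross opo βo))
    (s t : ι × Bool) : SlotEquiv port opo βo s t ↔
      (turn_involutive.toPerm * hcross.toPerm).SameCycle (port s.1, s.2) (port t.1, t.2) := by
  refine ⟨fun h ↦ ?_, fun h ↦ cornerEquiv_of_sameCycle hcross h⟩
  obtain ⟨f, hf, hft⟩ := exists_sameCycle_of_cornerEquiv hcross (cross_port hP hport s) h
  obtain rfl | rfl := flagCorner_eq_iff.1 (hft.trans (rfl : _ = flagCorner (port t.1, t.2)))
  · exact hf
  · have hturn := sameCycle_left turn_mul_turn (cross_mul_cross hcross) (cross_port hP hport s) hf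
    rwa [Function.Involutive.coe_toPerm, turn_involutive] at hturn

theorem exists_slotEquiv_iff [Finite O] (hP : IsOuterPiece port opo) (βo : OuterBit port opo)
    (hβo : IsSimple opo βo.1) (s : ι × Bool) :
    ∃ s', s'.1 ≠ s.1 ∧ ∀ t, SlotEquiv port opo βo.1 s t ↔ t = s ∨ t = s' := by
  have hcross := cross_involutive hP.involutive βo.2.1
  obtain ⟨f, hf_ne, hf⟩ := exists_sameCycle_fixed_iff turn_mul_turn
    (cross_mul_cross hcross) turn_ne (cross_port hP βo.2.2 s)
  obtain ⟨s', rfl⟩ := exists_port_of_cross_eq hP ((hf f).2 (Or.inr rfl)).1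
  have hport (t t' : ι × Bool) :
      (port t.1, t.2) = (port t'.1, t'.2) ↔ t = t' := by
    simp [Prod.ext_iff, ← hP.injective.eq_iff]
  have hiff (t : ι × Bool) : SlotEquiv port opo βo.1 s t ↔ t = s ∨ t = s' := by
    rw [slotEquiv_iff_sameCycle hP βo.2.2 hcross, ← hport t s, ← hport t s', ← hf]
    exact (and_iff_right (cross_port hP βo.2.2 t)).symm
  refine ⟨s', fun hs' ↦ hf_ne ?_, hiff⟩
  have hequiv := (hiff s').2 (Or.inr rfl)
  simp only [SlotEquiv, slotCorner, hs'] at hequiv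
  rw [hs', cornerAt_injective _ (hβo _ _ _ hequiv)]

end Slots

/-! ### Orienting the outer walks -/

section Orientation

-- The cycles of `r * τ` come in pairs exchanged by both `r` and `τ`; colour one of each pair.
lemma exists_common_coloring {F : Type*} {r τ : Equiv.Perm F} (hr : r * r = 1) (hτ : τ * τ = 1)
    (hr_ne : ∀ f, r f ≠ f) (hτ_ne : ∀ f, τ f ≠ f) :
    ∃ χ : F → Bool, ∀ f, χ (r f) = !χ f ∧ χ (τ f) = !χ f := by
  classical
  have hrr (f : F) : r (r f) = f := DFunLike.congr_fun hr f
  have hττ (f : F) : τ (τ f) = f := DFunLike.congr_fun hτ f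
  have hne (f : F) : ¬ (r * τ).SameCycle f (r f) := by
    rintro ⟨k, hk⟩
    obtain ⟨m, rfl | rfl⟩ := k.even_or_odd'
    · apply hr_ne (((r * τ) ^ m) f)
      rw [← Equiv.Perm.mul_apply, involution_zpow_left hr hτ, Equiv.Perm.mul_apply, ← hk,
        ← Equiv.Perm.mul_apply, ← zpow_add]
      congr 2
      ring
    · apply hτ_ne (((r * τ) ^ m) f)
      have hτm : τ (((r * τ) ^ m) f) = r (((r * τ) ^ (m + 1)) f) := by
        rw [add_comm, zpow_one_add, Equiv.Perm.mul_apply, Equiv.Perm.mul_apply, hrr]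
      rw [hτm, ← Equiv.Perm.mul_apply, involution_zpow_left hr hτ, Equiv.Perm.mul_apply, ← hk,
        ← Equiv.Perm.mul_apply, ← zpow_add]
      congr 2
      ring
  let cycle : F → Quotient (Equiv.Perm.SameCycle.setoid (r * τ)) := fun f ↦ ⟦f⟧
  let _ : LinearOrder (Quotient (Equiv.Perm.SameCycle.setoid (r * τ))) :=
    linearOrderOfSTO WellOrderingRel
  have hcycle_ne (f : F) : cycle f ≠ cycle (r f) := fun h ↦ hne f (Quotient.exact h)
  have hcycle_τ (f : F) : cycle (τ f) = cycle (r f) :=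
    Quotient.sound ⟨1, by rw [zpow_one, Equiv.Perm.mul_apply, hττ]⟩
  have hcycle_rτ (f : F) : cycle (r (τ f)) = cycle f :=
    (Quotient.sound ⟨1, by rw [zpow_one, Equiv.Perm.mul_apply]⟩ : cycle f = cycle (r (τ f))).symm
  have hlt (f : F) : decide (cycle (r f) < cycle f) = !decide (cycle f < cycle (r f)) := by
    rcases (hcycle_ne f).lt_or_gt with h | h <;> simp [h, h.asymm]
  exact ⟨fun f ↦ decide (cycle f < cycle (r f)), fun f ↦
    ⟨by simpa only [hrr] using hlt f, by simpa only [hcycle_τ, hcycle_rτ] using hlt f⟩⟩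

variable {ι J : Type*}

/-- Exchange the two sides of the ports at which `ε` is `true`. -/
def flipSlot (ε : ι → Bool) (s : ι × Bool) : ι × Bool := (s.1, s.2 ^^ ε s.1)

lemma flipSlot_involutive (ε : ι → Bool) : Function.Involutive (flipSlot ε) := fun s ↦ by
  simp [flipSlot]

/-- Each outer walk is directed from a slot `(i, true)` to a slot `(j, false)` with `ρ j = i`; the
walk at a slot is named by the port where it starts. -/
def slotWalk (ρ : ι → ι) (s : ι × Bool) : ι := bif s.2 then s.1 else ρ s.1

lemma exists_flipSlot_alternating {π : ι × Bool → ι × Bool} (hπ : Function.Involutive π)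
    (hπ_ne : ∀ s, π s ≠ s) : ∃ ε : ι → Bool, ∀ s, (flipSlot ε (π (flipSlot ε s))).2 = !s.2 := by
  have hr : Function.Involutive fun s : ι × Bool ↦ (s.1, !s.2) := fun s ↦ by simp
  obtain ⟨χ, hχ⟩ := exists_common_coloring (r := hr.toPerm) (τ := hπ.toPerm)
    (Equiv.ext hr) (Equiv.ext hπ) (fun s h ↦ by simpa using congrArg Prod.snd h) hπ_ne
  have hχ_not (i : ι) : χ (i, true) = !χ (i, false) := (hχ (i, false)).1
  have hχ_flip (s : ι × Bool) : χ (flipSlot (fun i ↦ χ (i, false)) s) = s.2 := by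
    obtain ⟨i, b⟩ := s
    rcases b <;> rcases h : χ (i, false) <;> simp [flipSlot, h, hχ_not]
  refine ⟨fun i ↦ χ (i, false), fun s ↦ ?_⟩
  rw [← hχ_flip, flipSlot_involutive]
  exact (hχ _).2.trans (congrArg _ (hχ_flip s))

lemma exists_perm_of_alternating {π : ι × Bool → ι × Bool} (hπ : Function.Involutive π)
    (hπ_alt : ∀ s, (π s).2 = !s.2) : ∃ ρ : Equiv.Perm ι,
      ∀ i, π (i, false) = (ρ i, true) ∧ π (i, true) = (ρ.symm i, false) := by
  have hπ_false (i : ι) : ((π (i, false)).1, true) = π (i, false) :=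
    Prod.ext rfl (hπ_alt (i, false)).symm
  have hπ_true (i : ι) : ((π (i, true)).1, false) = π (i, true) :=
    Prod.ext rfl (hπ_alt (i, true)).symm
  refine ⟨⟨fun i ↦ (π (i, false)).1, fun i ↦ (π (i, true)).1, fun i ↦ ?_, fun i ↦ ?_⟩,
    fun i ↦ ⟨(hπ_false i).symm, (hπ_true i).symm⟩⟩
  · simp only [hπ_false, hπ _]
  · simp only [hπ_true, hπ _]

lemma exists_orientation {R : ι × Bool → ι × Bool → Prop}
    (hR : ∀ s, ∃ s', s'.1 ≠ s.1 ∧ ∀ t, R s t ↔ t = s ∨ t = s')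
    (hR_symm : ∀ s t, R s t → R t s) :
    ∃ (ε : ι → Bool) (ρ : Equiv.Perm ι), (∀ i, ρ i ≠ i) ∧
      ∀ s t, R (flipSlot ε s) (flipSlot ε t) ↔ slotWalk ρ s = slotWalk ρ t := by
  choose π hπ_ne hπ using hR
  have hπ_inv : Function.Involutive π := fun s ↦
    (((hπ _ _).1 (hR_symm _ _ ((hπ s _).2 (.inr rfl)))).resolve_left
      fun h ↦ hπ_ne s (congrArg Prod.fst h.symm)).symm
  obtain ⟨ε, hε⟩ := exists_flipSlot_alternating hπ_inv fun s h ↦ hπ_ne s (congrArg Prod.fst h)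
  obtain ⟨ρ, hρ⟩ := exists_perm_of_alternating
    (π := fun s ↦ flipSlot ε (π (flipSlot ε s)))
    (fun s ↦ by simp only [flipSlot_involutive ε _, hπ_inv _]) hε
  refine ⟨ε, ρ, fun j h ↦ hπ_ne (flipSlot ε (j, false)) ?_, fun s t ↦ ?_⟩
  · exact (congrArg Prod.fst (hρ j).1).trans h
  rw [hπ, (flipSlot_involutive ε).injective.eq_iff, (flipSlot_involutive ε).eq_iff]
  obtain ⟨i, _ | _⟩ := s <;> obtain ⟨j, _ | _⟩ := t
  · simp [slotWalk, (hρ i).1, eq_comm]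
  · simp [slotWalk, (hρ i).1, eq_comm]
  · simp [slotWalk, (hρ i).2, ρ.eq_symm_apply, eq_comm]
  · simp [slotWalk, (hρ i).2, eq_comm]

/-- The bits on the wiring `q` after the sides of the ports have been exchanged by `ε`. -/
def flipBit (ε : ι → Bool) (q : ι ⊕ J × Fin 3 → ι ⊕ J × Fin 3) (γ : ι ⊕ J × Fin 3 → Bool)
    (w : ι ⊕ J × Fin 3) : Bool :=
  γ w ^^ (Sum.elim ε (fun _ ↦ false) w ^^ Sum.elim ε (fun _ ↦ false) (q w))

variable {R M : ι × Bool → ι × Bool → Prop} {q : ι ⊕ J × Fin 3 → ι ⊕ J × Fin 3}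
  {γ : ι ⊕ J × Fin 3 → Bool}

lemma flipBit_involutive (ε : ι → Bool) (q : ι ⊕ J × Fin 3 → ι ⊕ J × Fin 3) :
    Function.Involutive (flipBit ε q) := fun γ ↦ by
  funext w
  simp only [flipBit, Bool.xor_assoc, Bool.xor_self, Bool.xor_false]

lemma sideNode_flip (ε : ι → Bool) (w : ι ⊕ J × Fin 3) (b : Bool) :
    Sum.map (flipSlot ε) id (sideNode w b) =
      sideNode w (b ^^ Sum.elim ε (fun _ ↦ false) w) := by
  cases w <;> simp [sideNode, flipSlot]

lemma NodeLink.flip {ε : ι → Bool} {n n' : (ι × Bool) ⊕ (J × Fin 3)}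
    (h : NodeLink (fun s t ↦ R (flipSlot ε s) (flipSlot ε t)) q γ n n') :
    NodeLink R q (flipBit ε q γ) (Sum.map (flipSlot ε) id n) (Sum.map (flipSlot ε) id n') := by
  cases h with
  | excursion h => exact .excursion h
  | passage w b =>
    have h := NodeLink.passage (R := R) (q := q) (γ := flipBit ε q γ) w
      (b ^^ Sum.elim ε (fun _ ↦ false) w)
    rw [sideNode_flip, sideNode_flip]
    convert h using 2
    simp only [flipBit]
    cases b <;> cases γ w <;> cases Sum.elim ε (fun _ ↦ false) w <;> simp

lemma eqvGen_map {α β : Type*} {r : α → α → Prop} {s : β → β → Prop} {f : α → β}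
    (h : ∀ a b, r a b → Relation.EqvGen s (f a) (f b)) {a b : α} (hab : Relation.EqvGen r a b) :
    Relation.EqvGen s (f a) (f b) := by
  induction hab with
  | rel a b hab => exact h a b hab
  | refl a => exact .refl _
  | symm a b _ ih => exact .symm _ _ ih
  | trans a b c _ _ ih ih' => exact .trans _ _ _ ih ih'

lemma IsAdmissible.flip {ε : ι → Bool} (h : IsAdmissible R M q (flipBit ε q γ)) :
    IsAdmissible (fun s t ↦ R (flipSlot ε s) (flipSlot ε t))
      (fun s t ↦ M (flipSlot ε s) (flipSlot ε t)) q γ :=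
  ⟨fun z c c' hcc' ↦ h.1 z c c' (eqvGen_map (fun _ _ h ↦ .rel _ _ (NodeLink.flip h)) hcc'),
    fun _ _ hst ↦ h.2 _ _ (eqvGen_map (fun _ _ h ↦ .rel _ _ (NodeLink.flip h)) hst)⟩

lemma ncard_admissibleBits_le_flip [Finite ι] [Finite J] (hq : Function.Involutive q)
    (ε : ι → Bool) : (admissibleBits R M q).ncard ≤
      (admissibleBits (fun s t ↦ R (flipSlot ε s) (flipSlot ε t))
        (fun s t ↦ M (flipSlot ε s) (flipSlot ε t)) q).ncard := by
  refine Set.ncard_le_ncard_of_injOn (flipBit ε q) (fun γ hγ ↦ ⟨fun w ↦ ?_, ?_⟩)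
    (flipBit_involutive ε q).injective.injOn (Set.toFinite _)
  · simp only [flipBit, hq w, hγ.1, Bool.xor_comm (Sum.elim _ _ (q w))]
  · exact IsAdmissible.flip ((flipBit_involutive ε q γ).symm ▸ hγ.2)

lemma ncard_admissibleBits_flip [Finite ι] [Finite J] (hq : Function.Involutive q)
    (ε : ι → Bool) : (admissibleBits R M q).ncard =
      (admissibleBits (fun s t ↦ R (flipSlot ε s) (flipSlot ε t))
        (fun s t ↦ M (flipSlot ε s) (flipSlot ε t)) q).ncard := by
  refine (ncard_admissibleBits_le_flip hq ε).antisymm ?_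
  simpa only [flipSlot_involutive ε _] using ncard_admissibleBits_le_flip (q := q)
    (R := fun s t ↦ R (flipSlot ε s) (flipSlot ε t))
    (M := fun s t ↦ M (flipSlot ε s) (flipSlot ε t)) hq ε

/-- The directed outer walk or inner corner on the side `b` of a wired dart. -/
def walkNode (ρ : ι → ι) (w : ι ⊕ J × Fin 3) (b : Bool) : ι ⊕ J × Fin 3 :=
  Sum.map (slotWalk ρ) id (sideNode w b)

/-- Two nodes are consecutive along a wired edge, with each outer walk contracted to a point. -/
def WalkLink (ρ : ι → ι) (q : ι ⊕ J × Fin 3 → ι ⊕ J × Fin 3) (γ : ι ⊕ J × Fin 3 → Bool)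
    (n n' : ι ⊕ J × Fin 3) : Prop :=
  ∃ w b, n = walkNode ρ w b ∧ n' = walkNode ρ (q w) (b ^^ γ w)

/-- The links `L` create no repeated vertex, where `K` is the relation between outer walks of
visiting a common vertex. -/
def IsSeparating (K : ι → ι → Prop) (L : ι ⊕ J × Fin 3 → ι ⊕ J × Fin 3 → Prop) : Prop :=
  (∀ z c c', Relation.EqvGen L (Sum.inr (z, c)) (Sum.inr (z, c')) → c = c') ∧
    ∀ i j, Relation.EqvGen L (Sum.inl i) (Sum.inl j) → K i j → i = j

lemma eqvGen_nodeLink_iff {ρ : ι → ι} {n n' : (ι × Bool) ⊕ (J × Fin 3)} :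
    Relation.EqvGen (NodeLink (fun s t ↦ slotWalk ρ s = slotWalk ρ t) q γ) n n' ↔
      Relation.EqvGen (WalkLink ρ q γ) (Sum.map (slotWalk ρ) id n)
        (Sum.map (slotWalk ρ) id n') := by
  let lift : ι ⊕ J × Fin 3 → (ι × Bool) ⊕ (J × Fin 3) := Sum.map (fun i ↦ (i, true)) id
  have hlift (n : (ι × Bool) ⊕ (J × Fin 3)) :
      Relation.EqvGen (NodeLink (fun s t ↦ slotWalk ρ s = slotWalk ρ t) q γ) n
        (lift (Sum.map (slotWalk ρ) id n)) := by
    cases n with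
    | inl s => exact .rel _ _ (.excursion rfl)
    | inr w => exact .refl _
  constructor
  · refine eqvGen_map fun _ _ h ↦ ?_
    cases h with
    | excursion h => simp only [Sum.map_inl, h, Relation.EqvGen.refl]
    | passage w b => exact .rel _ _ ⟨w, b, rfl, rfl⟩
  · intro h
    refine .trans _ _ _ (hlift n) (.trans _ _ _ (eqvGen_map (f := lift) ?_ h)
      (.symm _ _ (hlift n')))
    rintro _ _ ⟨w, b, rfl, rfl⟩
    exact .trans _ _ _ (.symm _ _ (hlift _)) (.trans _ _ _ (.rel _ _ (.passage w b)) (hlift _))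

lemma isAdmissible_iff_isSeparating {ρ : ι → ι} {K : ι → ι → Prop} :
    IsAdmissible (fun s t ↦ slotWalk ρ s = slotWalk ρ t)
      (fun s t ↦ K (slotWalk ρ s) (slotWalk ρ t)) q γ ↔ IsSeparating K (WalkLink ρ q γ) := by
  simp only [IsAdmissible, eqvGen_nodeLink_iff]
  exact and_congr_right fun _ ↦
    ⟨fun h i j ↦ h (i, true) (j, true), fun h s t ↦ h (slotWalk ρ s) (slotWalk ρ t)⟩

/-- The symmetric bit functions on a wiring `q` that create no repeated vertex, in terms of the
directed outer walks. -/
def separatingBits (ρ : ι → ι) (K : ι → ι → Prop) (q : ι ⊕ J × Fin 3 → ι ⊕ J × Fin 3) :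
    Set (ι ⊕ J × Fin 3 → Bool) :=
  {γ | (∀ w, γ (q w) = γ w) ∧ IsSeparating K (WalkLink ρ q γ)}

theorem ncard_admissibleBits_eq [Finite ι] [Finite J] (hq : Function.Involutive q)
    {ε : ι → Bool} {ρ : ι → ι} {K : ι → ι → Prop}
    (hR : ∀ s t, R (flipSlot ε s) (flipSlot ε t) ↔ slotWalk ρ s = slotWalk ρ t)
    (hM : ∀ s t, M (flipSlot ε s) (flipSlot ε t) ↔ K (slotWalk ρ s) (slotWalk ρ t)) :
    (admissibleBits R M q).ncard = (separatingBits ρ K q).ncard := by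
  rw [ncard_admissibleBits_flip hq ε]
  simp only [hR, hM, admissibleBits, separatingBits, isAdmissible_iff_isSeparating]

theorem exists_walk_relation (hR : ∀ s, ∃ s', s'.1 ≠ s.1 ∧ ∀ t, R s t ↔ t = s ∨ t = s')
    (hR_symm : ∀ s t, R s t → R t s) (hM_symm : ∀ s t, M s t → M t s)
    (hM_self : ∀ i b b', M (i, b) (i, b')) (hM_trans : ∀ s t t', M s t → R t t' → M s t') :
    ∃ (ε : ι → Bool) (ρ : Equiv.Perm ι) (K : ι → ι → Prop), (∀ i, ρ i ≠ i) ∧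
      (∀ i j, K i j → K j i) ∧ (∀ i, K i (ρ i)) ∧
      (∀ s t, R (flipSlot ε s) (flipSlot ε t) ↔ slotWalk ρ s = slotWalk ρ t) ∧
      ∀ s t, M (flipSlot ε s) (flipSlot ε t) ↔ K (slotWalk ρ s) (slotWalk ρ t) := by
  obtain ⟨ε, ρ, hρ, hRρ⟩ := exists_orientation hR hR_symm
  have hstart (s : ι × Bool) : R (flipSlot ε s) (flipSlot ε (slotWalk ρ s, true)) :=
    (hRρ _ _).2 rfl
  have hMK (s t : ι × Bool) : M (flipSlot ε s) (flipSlot ε t) ↔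
      M (flipSlot ε (slotWalk ρ s, true)) (flipSlot ε (slotWalk ρ t, true)) :=
    ⟨fun h ↦ hM_symm _ _ (hM_trans _ _ _ (hM_symm _ _ (hM_trans _ _ _ h (hstart t))) (hstart s)),
      fun h ↦ hM_symm _ _ (hM_trans _ _ _ (hM_symm _ _ (hM_trans _ _ _ h
        (hR_symm _ _ (hstart t)))) (hR_symm _ _ (hstart s)))⟩
  exact ⟨ε, ρ, fun i j ↦ M (flipSlot ε (i, true)) (flipSlot ε (j, true)), hρ,
    fun i j ↦ hM_symm _ _, fun i ↦ (hMK (i, true) (i, false)).1 (hM_self _ _ _), hRρ, hMK⟩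

end Orientation

/-! ### Equivalence relations as bit matrices -/

section BitMatrix

/-- The number whose binary ones are at the positions `0, d, …, d * (k - 1)`. -/
def comb (d : ℕ) : ℕ → ℕ
  | 0 => 0
  | k + 1 => 2 ^ d * comb d k + 1

/-- Relations on `{0, …, n - 1}` are encoded by natural numbers, the pair `(x, y)` being the bit
`n * x + y`. This is row `a` of such a relation. -/
def row (n P a : ℕ) : ℕ := P >>> (n * a) % 2 ^ n

/-- Merge the classes of `a` and `b` in the encoded equivalence relation `P`. -/
def join (n P a b : ℕ) : ℕ :=
  P ||| (row n P a ||| row n P b) * ((P >>> a ||| P >>> b) &&& comb n n)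

lemma testBit_comb {d : ℕ} (hd : 0 < d) (k j : ℕ) :
    (comb d k).testBit j ↔ d ∣ j ∧ j < d * k := by
  induction k generalizing j with
  | zero => simp [comb]
  | succ k ih =>
    rw [comb, Nat.testBit_two_pow_mul_add _ (Nat.one_lt_two_pow hd.ne')]
    split_ifs with hj
    · rw [Nat.testBit_one_eq_true_iff_self_eq_zero]
      refine ⟨?_, fun h ↦ Nat.eq_zero_of_dvd_of_lt h.1 hj⟩
      rintro rfl
      exact ⟨dvd_zero d, by positivity⟩
    · rw [ih, Nat.dvd_sub_iff_left (not_lt.1 hj) (dvd_refl d), Nat.mul_succ]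
      omega

lemma testBit_mul_eq {n m T : ℕ} (hn : 0 < n) (hm : m < 2 ^ n) (hT : ∀ j, T.testBit j → n ∣ j)
    (j : ℕ) :
    (m * T).testBit j =
      if j < n then m.testBit j && T.testBit 0 else (m * (T >>> n)).testBit (j - n) := by
  have hmod : T % 2 ^ n = (T.testBit 0).toNat := by
    refine Nat.eq_of_testBit_eq fun i ↦ ?_
    rw [Nat.testBit_mod_two_pow]
    rcases Nat.eq_zero_or_pos i with rfl | hi
    · cases T.testBit 0 <;> simp [hn]
    · have hTi : (decide (i < n) && T.testBit i) = false := by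
        rw [Bool.and_eq_false_imp, decide_eq_true_iff]
        exact fun hin ↦ Bool.eq_false_of_not_eq_true fun h ↦
          Nat.not_dvd_of_pos_of_lt hi hin (hT i h)
      rw [hTi, Nat.testBit_lt_two_pow]
      exact (Bool.toNat_lt _).trans_le (Nat.pow_le_pow_right two_pos hi)
  have hsplit : m * T = 2 ^ n * (m * (T >>> n)) + m * (T.testBit 0).toNat := by
    rw [← hmod, Nat.shiftRight_eq_div_pow]
    nth_rw 1 [← Nat.div_add_mod T (2 ^ n)]
    ring
  have hlt : m * (T.testBit 0).toNat < 2 ^ n := by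
    cases T.testBit 0 <;> simp [hm]
  rw [hsplit, Nat.testBit_two_pow_mul_add _ hlt]
  cases T.testBit 0 <;> simp

lemma testBit_mul_of_sparse {n m T : ℕ} (hm : m < 2 ^ n) (hT : ∀ j, T.testBit j → n ∣ j)
    (x : ℕ) {y : ℕ} (hy : y < n) :
    (m * T).testBit (n * x + y) = (m.testBit y && T.testBit (n * x)) := by
  have hn : 0 < n := by omega
  induction x generalizing T with
  | zero => rw [mul_zero, zero_add, testBit_mul_eq hn hm hT, if_pos hy]
  | succ x ih =>
    rw [testBit_mul_eq hn hm hT, if_neg (by rw [Nat.mul_succ]; omega),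
      show n * (x + 1) + y - n = n * x + y by rw [Nat.mul_succ]; omega, ih, Nat.testBit_shiftRight,
      Nat.mul_succ, add_comm n]
    intro j hj
    rw [Nat.testBit_shiftRight] at hj
    exact (Nat.dvd_add_right (dvd_refl n)).1 (hT _ hj)

lemma testBit_join {n x y : ℕ} (P a b : ℕ) (hx : x < n) (hy : y < n) :
    (join n P a b).testBit (n * x + y) ↔ P.testBit (n * x + y) ∨
      (P.testBit (n * x + a) ∨ P.testBit (n * x + b)) ∧
        (P.testBit (n * a + y) ∨ P.testBit (n * b + y)) := by
  have hn : 0 < n := by omega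
  have hrow (c : ℕ) : (row n P c).testBit y = P.testBit (n * c + y) := by
    simp [row, Nat.testBit_mod_two_pow, hy]
  have hcomb : (comb n n).testBit (n * x) := (testBit_comb hn _ _).2
    ⟨dvd_mul_right n x, Nat.mul_lt_mul_of_pos_left hx hn⟩
  have hlt : row n P a ||| row n P b < 2 ^ n :=
    Nat.or_lt_two_pow (Nat.mod_lt _ (by positivity)) (Nat.mod_lt _ (by positivity))
  rw [join, Nat.testBit_or, testBit_mul_of_sparse hlt _ x hy]
  · simp [hrow, hcomb, add_comm, and_comm]
  · intro j hj
    rw [Nat.testBit_and, Bool.and_eq_true] at hj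
    exact ((testBit_comb hn n j).1 hj.2).1

end BitMatrix

section Represents

variable {α : Type*} {n : ℕ} {code : α → ℕ} {P : ℕ} {s : α → α → Prop}

/-- The bit matrix `P` encodes the equivalence relation generated by `s`. -/
def Represents (n : ℕ) (code : α → ℕ) (P : ℕ) (s : α → α → Prop) : Prop :=
  ∀ a b, P.testBit (n * code a + code b) ↔ Relation.EqvGen s a b

lemma represents_comb (hcode : Function.Injective code) (hlt : ∀ a, code a < n) :
    Represents n code (comb (n + 1) n) fun _ _ ↦ False := by
  have hgen (a b : α) : Relation.EqvGen (fun _ _ ↦ False) a b ↔ a = b := by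
    refine ⟨fun h ↦ ?_, fun h ↦ h ▸ .refl a⟩
    induction h with
    | rel _ _ h => exact h.elim
    | refl => rfl
    | symm _ _ _ ih => exact ih.symm
    | trans _ _ _ _ _ ih ih' => exact ih.trans ih'
  intro a b
  have ha := hlt a
  have hb := hlt b
  rw [testBit_comb n.succ_pos, hgen, ← hcode.eq_iff]
  constructor
  · rintro ⟨hdvd, -⟩
    have hmod : code b ≡ code a [MOD n + 1] := by
      refine Nat.ModEq.add_left_cancel' (n * code a) ?_
      rw [← Nat.succ_mul]
      exact (Nat.modEq_zero_iff_dvd.2 hdvd).trans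
        (Nat.modEq_zero_iff_dvd.2 (dvd_mul_right _ _)).symm
    exact (hmod.eq_of_lt_of_lt (by omega) (by omega)).symm
  · intro h
    rw [← h, ← Nat.succ_mul]
    exact ⟨dvd_mul_right _ _, Nat.mul_lt_mul_of_pos_left ha n.succ_pos⟩

lemma eqvGen_or_pair_iff (a b x y : α) :
    Relation.EqvGen (fun x y ↦ s x y ∨ x = a ∧ y = b) x y ↔ Relation.EqvGen s x y ∨
      (Relation.EqvGen s x a ∨ Relation.EqvGen s x b) ∧
        (Relation.EqvGen s a y ∨ Relation.EqvGen s b y) := by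
  have hmono {x y : α} : Relation.EqvGen s x y →
      Relation.EqvGen (fun x y ↦ s x y ∨ x = a ∧ y = b) x y :=
    fun h ↦ Relation.EqvGen.mono (fun _ _ h ↦ Or.inl h) _ _ h
  have hab : Relation.EqvGen (fun x y ↦ s x y ∨ x = a ∧ y = b) a b := .rel _ _ (.inr ⟨rfl, rfl⟩)
  have hequiv := Relation.EqvGen.is_equivalence s
  constructor
  · intro h
    induction h with
    | rel x y h =>
      obtain h | ⟨rfl, rfl⟩ := h
      · exact Or.inl (.rel _ _ h)
      · exact Or.inr ⟨Or.inl (.refl _), Or.inr (.refl _)⟩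
    | refl x => exact Or.inl (.refl _)
    | symm x y _ ih =>
      exact ih.imp hequiv.symm fun h ↦
        ⟨h.2.imp hequiv.symm hequiv.symm, h.1.imp hequiv.symm hequiv.symm⟩
    | trans x y z _ _ ih ih' =>
      obtain h | ⟨hx, hy⟩ := ih <;> obtain h' | ⟨hy', hz⟩ := ih'
      · exact Or.inl (hequiv.trans h h')
      · exact Or.inr ⟨hy'.imp (hequiv.trans h) (hequiv.trans h), hz⟩
      · exact Or.inr ⟨hx, hy.imp (hequiv.trans · h') (hequiv.trans · h')⟩
      · exact Or.inr ⟨hx, hz⟩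
  · rintro (h | ⟨hx | hx, hy | hy⟩)
    · exact hmono h
    · exact .trans _ _ _ (hmono hx) (hmono hy)
    · exact .trans _ _ _ (hmono hx) (.trans _ _ _ hab (hmono hy))
    · exact .trans _ _ _ (hmono hx) (.trans _ _ _ (.symm _ _ hab) (hmono hy))
    · exact .trans _ _ _ (hmono hx) (hmono hy)

lemma Represents.join (hlt : ∀ a, code a < n) (h : Represents n code P s) (a b : α) :
    Represents n code (join n P (code a) (code b)) fun x y ↦ s x y ∨ x = a ∧ y = b := by
  intro x y
  rw [testBit_join P _ _ (hlt x) (hlt y), eqvGen_or_pair_iff, h, h, h, h, h]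

/-- Merge the two pairs of nodes identified by an edge with bit `g`; `e c b` is the node on the
side `b` of the end `c`. -/
def joinEdge (n P : ℕ) (e : Bool → Bool → ℕ) (g : Bool) : ℕ :=
  join n (join n P (e false false) (e true g)) (e false true) (e true (!g))

/-- Merge the nodes identified by a family of edges with bits `g`. -/
def joinEdges (n : ℕ) : {m : ℕ} → (Fin m → Bool → Bool → ℕ) → (Fin m → Bool) → ℕ → ℕ
  | 0, _, _, P => P
  | _ + 1, e, g, P => joinEdges n (Fin.tail e) (Fin.tail g) (joinEdge n P (e 0) (g 0))

lemma Represents.joinEdges (hlt : ∀ a, code a < n) {m : ℕ} (e : Fin m → Bool → Bool → α)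
    (g : Fin m → Bool) (h : Represents n code P s) :
    Represents n code (joinEdges n (fun i c b ↦ code (e i c b)) g P)
      fun x y ↦ s x y ∨ ∃ i b, x = e i false b ∧ y = e i true (b ^^ g i) := by
  induction m generalizing P s with
  | zero => simpa [CiDC.joinEdges] using h
  | succ m ih =>
    have h' := ih (Fin.tail e) (Fin.tail g)
      ((h.join hlt (e 0 false false) (e 0 true (g 0))).join hlt (e 0 false true) (e 0 true (!g 0)))
    have hrel : (fun x y ↦ s x y ∨ ∃ i b, x = e i false b ∧ y = e i true (b ^^ g i)) =
        fun x y ↦ ((s x y ∨ x = e 0 false false ∧ y = e 0 true (g 0)) ∨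
          x = e 0 false true ∧ y = e 0 true (!g 0)) ∨
          ∃ i b, x = Fin.tail e i false b ∧ y = Fin.tail e i true (b ^^ Fin.tail g i) := by
      funext x y
      simp [Fin.exists_fin_succ, Fin.tail, or_assoc]
    rw [hrel]
    exact h'

/-- The matrices `joinEdges n e g P` disjoint from `bad`, for all choices of the bits `g`. Bits of
a matrix only get switched on along the way, so a partial choice that meets `bad` is abandoned. -/
def search (n bad : ℕ) : {m : ℕ} → (Fin m → Bool → Bool → ℕ) → ℕ → List ℕ
  | 0, _, P => if P &&& bad = 0 then [P] else []
  | _ + 1, e, P => if P &&& bad = 0 then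
      search n bad (Fin.tail e) (joinEdge n P (e 0) false) ++
        search n bad (Fin.tail e) (joinEdge n P (e 0) true)
    else []

lemma testBit_joinEdges_of_testBit {m : ℕ} (e : Fin m → Bool → Bool → ℕ) (g : Fin m → Bool)
    {j : ℕ} (h : P.testBit j) : (joinEdges n e g P).testBit j := by
  induction m generalizing P with
  | zero => exact h
  | succ m ih =>
    refine ih _ _ ?_
    simp only [joinEdge, join, Nat.testBit_or, h, Bool.true_or]

lemma joinEdges_and_ne_zero {m bad : ℕ} (e : Fin m → Bool → Bool → ℕ) (g : Fin m → Bool)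
    (h : P &&& bad ≠ 0) : joinEdges n e g P &&& bad ≠ 0 := by
  obtain ⟨j, hj⟩ := Nat.exists_testBit_of_ne_zero h
  rw [Nat.testBit_and, Bool.and_eq_true] at hj
  refine fun h0 ↦ Bool.false_ne_true ((Nat.zero_testBit j).symm.trans ?_)
  rw [← h0, Nat.testBit_and, testBit_joinEdges_of_testBit e g hj.1, hj.2, Bool.and_self]

theorem countP_search (n bad : ℕ) {m : ℕ} (e : Fin m → Bool → Bool → ℕ) (P : ℕ) (p : ℕ → Bool) :
    (search n bad e P).countP p =
      ∑ g, if joinEdges n e g P &&& bad = 0 ∧ p (joinEdges n e g P) then 1 else 0 := by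
  induction m generalizing P with
  | zero =>
    rw [Fintype.sum_unique]
    by_cases hP : P &&& bad = 0 <;> simp [search, joinEdges, hP, List.countP_singleton]
  | succ m ih =>
    by_cases hP : P &&& bad = 0
    · rw [search, if_pos hP, List.countP_append, ih, ih,
        ← (Fin.consEquiv fun _ ↦ Bool).sum_comp, Fintype.sum_prod_type, Fintype.sum_bool, add_comm]
      rfl
    · rw [Finset.sum_eq_zero fun g _ ↦ if_neg fun h ↦ joinEdges_and_ne_zero e g hP h.1, search,
        if_neg hP, List.countP_nil]

end Represents

/-! ### Counting the bits of a wiring -/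

section Wiring

variable {κ W : Type*}

/-- The pairing of the darts `W` by the edges `κ`, where `E (i, c)` is the end `c` of edge `i`. -/
def wire (E : κ × Bool ≃ W) (w : W) : W := E ((E.symm w).1, !(E.symm w).2)

/-- Bits of the edges, as a function of the darts. -/
def edgeBit (E : κ × Bool ≃ W) (g : κ → Bool) (w : W) : Bool := g (E.symm w).1

lemma wire_apply (E : κ × Bool ≃ W) (i : κ) (c : Bool) : wire E (E (i, c)) = E (i, !c) := by
  rw [wire, E.symm_apply_apply]

lemma edgeBit_apply (E : κ × Bool ≃ W) (g : κ → Bool) (i : κ) (c : Bool) :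
    edgeBit E g (E (i, c)) = g i := by
  rw [edgeBit, E.symm_apply_apply]

lemma wire_involutive (E : κ × Bool ≃ W) : Function.Involutive (wire E) := fun w ↦ by
  obtain ⟨⟨i, c⟩, rfl⟩ := E.surjective w
  rw [wire_apply, wire_apply, Bool.not_not]

lemma edgeBit_injective (E : κ × Bool ≃ W) : Function.Injective (edgeBit E) := fun g g' h ↦ by
  funext i
  simpa only [edgeBit_apply] using congrFun h (E (i, false))

lemma exists_edgeBit_eq_iff {E : κ × Bool ≃ W} {γ : W → Bool} :
    (∃ g, edgeBit E g = γ) ↔ ∀ w, γ (wire E w) = γ w := by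
  constructor
  · rintro ⟨g, rfl⟩ w
    obtain ⟨⟨i, c⟩, rfl⟩ := E.surjective w
    rw [wire_apply, edgeBit_apply, edgeBit_apply]
  · intro h
    refine ⟨fun i ↦ γ (E (i, false)), funext fun w ↦ ?_⟩
    obtain ⟨⟨i, _ | _⟩, rfl⟩ := E.surjective w
    · rw [edgeBit_apply]
    · rw [edgeBit_apply, ← h, wire_apply, Bool.not_false]

variable {ι J : Type*} {ρ : ι → ι} {K : ι → ι → Prop}

lemma ncard_separatingBits_wire (E : κ × Bool ≃ ι ⊕ J × Fin 3) :
    (separatingBits ρ K (wire E)).ncard =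
      {g | IsSeparating K (WalkLink ρ (wire E) (edgeBit E g))}.ncard := by
  rw [← Set.ncard_image_of_injective _ (edgeBit_injective E)]
  congr 1
  ext γ
  constructor
  · rintro ⟨hγ, hsep⟩
    obtain ⟨g, rfl⟩ := exists_edgeBit_eq_iff.2 hγ
    exact ⟨g, hsep, rfl⟩
  · rintro ⟨g, hsep, rfl⟩
    exact ⟨exists_edgeBit_eq_iff.1 ⟨g, rfl⟩, hsep⟩

lemma eqvGen_walkLink_wire (E : κ × Bool ≃ ι ⊕ J × Fin 3) (g : κ → Bool) :
    Relation.EqvGen (WalkLink ρ (wire E) (edgeBit E g)) =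
      Relation.EqvGen fun x y ↦ ∃ i b, x = walkNode ρ (E (i, false)) b ∧
        y = walkNode ρ (E (i, true)) (b ^^ g i) := by
  funext x y
  refine propext ⟨eqvGen_map (f := id) ?_, eqvGen_map (f := id) ?_⟩
  · rintro _ _ ⟨w, b, rfl, rfl⟩
    obtain ⟨⟨i, _ | _⟩, rfl⟩ := E.surjective w
    · exact .rel _ _ ⟨i, b, rfl, by rw [wire_apply, edgeBit_apply, Bool.not_false]; rfl⟩
    · refine .symm _ _ (.rel _ _ ⟨i, b ^^ g i, ?_, ?_⟩)
      · rw [wire_apply, edgeBit_apply, Bool.not_true]; rfl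
      · rw [Bool.xor_assoc, Bool.xor_self, Bool.xor_false]; rfl
  · rintro _ _ ⟨i, b, rfl, rfl⟩
    exact .rel _ _ ⟨E (i, false), b, rfl, by rw [wire_apply, edgeBit_apply, Bool.not_false]; rfl⟩

end Wiring

section Count

variable {k m : ℕ} {ρ : Fin 5 → Fin 5} {K : Fin 5 → Fin 5 → Prop}

/-- The index of an outer walk or inner corner in the bit matrices; it is below `20` if there are
at most five inner vertices. -/
def nodeCode : Fin 5 ⊕ Fin k × Fin 3 → ℕ
  | Sum.inl i => i
  | Sum.inr w => 5 + 3 * w.1 + w.2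

lemma nodeCode_injective : Function.Injective (nodeCode (k := k)) := by
  rintro (i | ⟨z, c⟩) (i' | ⟨z', c'⟩) h <;>
    simp only [nodeCode, Sum.inl.injEq, Sum.inr.injEq, Prod.mk.injEq, reduceCtorEq] at h ⊢ <;> omega

lemma nodeCode_lt (hk : k ≤ 5) (a : Fin 5 ⊕ Fin k × Fin 3) : nodeCode a < 20 := by
  rcases a with i | ⟨z, c⟩ <;> simp only [nodeCode] <;> omega

/-- The codes of the sides of the ends of the edges of a wiring. -/
def endCode (ρ : Fin 5 → Fin 5) (E : Fin m × Bool ≃ Fin 5 ⊕ Fin k × Fin 3) (i : Fin m)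
    (c b : Bool) : ℕ :=
  nodeCode (walkNode ρ (E (i, c)) b)

lemma represents_walkLink (hk : k ≤ 5) (E : Fin m × Bool ≃ Fin 5 ⊕ Fin k × Fin 3)
    (g : Fin m → Bool) :
    Represents 20 nodeCode (joinEdges 20 (endCode ρ E) g (comb 21 20))
      (WalkLink ρ (wire E) (edgeBit E g)) := by
  have h := (represents_comb nodeCode_injective (nodeCode_lt hk)).joinEdges (nodeCode_lt hk)
    (fun i c b ↦ walkNode ρ (E (i, c)) b) g
  simp only [false_or] at h
  simp only [Represents, eqvGen_walkLink_wire]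
  exact h

/-- Pairs of nodes that are never allowed to be identified: the outer walks through a common port,
and the corners of an inner vertex. -/
def clashes (ρ : Fin 5 → Fin 5) (k : ℕ) :
    List ((Fin 5 ⊕ Fin k × Fin 3) × (Fin 5 ⊕ Fin k × Fin 3)) :=
  (List.finRange 5).map (fun i ↦ (Sum.inl i, Sum.inl (ρ i))) ++
    (List.finRange k).flatMap fun z ↦ [(Sum.inr (z, 0), Sum.inr (z, 1)),
      (Sum.inr (z, 0), Sum.inr (z, 2)), (Sum.inr (z, 1), Sum.inr (z, 2))]

/-- Pairs of outer walks that are not forced to meet by a common port. -/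
def freePairs (ρ : Fin 5 → Fin 5) : List (Fin 5 × Fin 5) :=
  (List.finRange 5 ×ˢ List.finRange 5).filter fun p ↦ p.2 < p.1 ∧ ρ p.1 ≠ p.2 ∧ ρ p.2 ≠ p.1

lemma mem_freePairs {p : Fin 5 × Fin 5} :
    p ∈ freePairs ρ ↔ p.2 < p.1 ∧ ρ p.1 ≠ p.2 ∧ ρ p.2 ≠ p.1 := by
  obtain ⟨i, j⟩ := p
  simp [freePairs]

lemma forall_mem_clashes_iff {r : Fin 5 ⊕ Fin k × Fin 3 → Fin 5 ⊕ Fin k × Fin 3 → Prop} :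
    (∀ p ∈ clashes ρ k, r p.1 p.2) ↔ (∀ i, r (Sum.inl i) (Sum.inl (ρ i))) ∧
      ∀ z c c', c < c' → r (Sum.inr (z, c)) (Sum.inr (z, c')) := by
  have hcorner (s : Fin 3 → Fin 3 → Prop) : (∀ c c', c < c' → s c c') ↔ s 0 1 ∧ s 0 2 ∧ s 1 2 := by
    simp [Fin.forall_fin_succ, and_assoc]
  simp only [clashes, List.forall_mem_append, List.forall_mem_map, List.forall_mem_flatMap,
    List.mem_finRange, true_imp_iff, List.forall_mem_cons, hcorner]
  simp

lemma isSeparating_iff (hρ : ∀ i, ρ i ≠ i) (hK_symm : ∀ i j, K i j → K j i) (hK : ∀ i, K i (ρ i))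
    {L : Fin 5 ⊕ Fin k × Fin 3 → Fin 5 ⊕ Fin k × Fin 3 → Prop} :
    IsSeparating K L ↔ (∀ p ∈ clashes ρ k, ¬ Relation.EqvGen L p.1 p.2) ∧
      ∀ p ∈ freePairs ρ, K p.1 p.2 → ¬ Relation.EqvGen L (Sum.inl p.1) (Sum.inl p.2) := by
  rw [forall_mem_clashes_iff (r := fun x y ↦ ¬ Relation.EqvGen L x y)]
  simp only [mem_freePairs]
  constructor
  · rintro ⟨hinner, houter⟩
    exact ⟨⟨fun i h ↦ hρ i (houter _ _ h (hK i)).symm, fun z c c' hc h ↦ hc.ne (hinner z c c' h)⟩,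
      fun p hp hKp h ↦ hp.1.ne' (houter _ _ h hKp)⟩
  · rintro ⟨⟨hport, hinner⟩, hfree⟩
    constructor
    · intro z c c' h
      obtain hc | hc | hc := lt_trichotomy c c'
      · exact (hinner z c c' hc h).elim
      · exact hc
      · exact (hinner z c' c hc (.symm _ _ h)).elim
    · have key {i j : Fin 5} (h : Relation.EqvGen L (Sum.inl i) (Sum.inl j)) (hKij : K i j) :
          ¬ j < i := fun hij ↦
        hfree (i, j) ⟨hij, fun he ↦ hport i (he ▸ h), fun he ↦ hport j (he ▸ .symm _ _ h)⟩ hKij h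
      intro i j h hKij
      exact le_antisymm (not_lt.1 (key h hKij)) (not_lt.1 (key (.symm _ _ h) (hK_symm i j hKij)))

/-- The number whose binary ones are at the positions of the given pairs of nodes. -/
def mask (l : List ((Fin 5 ⊕ Fin k × Fin 3) × (Fin 5 ⊕ Fin k × Fin 3))) : ℕ :=
  l.foldr (fun p M ↦ 2 ^ (20 * nodeCode p.1 + nodeCode p.2) ||| M) 0

lemma and_mask_eq_zero_iff {P : ℕ}
    {l : List ((Fin 5 ⊕ Fin k × Fin 3) × (Fin 5 ⊕ Fin k × Fin 3))} :
    P &&& mask l = 0 ↔ ∀ p ∈ l, ¬ P.testBit (20 * nodeCode p.1 + nodeCode p.2) := by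
  induction l with
  | nil => simp [mask]
  | cons p l ih =>
    rw [List.forall_mem_cons, ← ih, mask, List.foldr_cons, Nat.and_or_distrib_left,
      Nat.or_eq_zero_iff, Nat.and_two_pow, mask]
    cases P.testBit _ <;> simp

/-- The bit matrices of the choices of bits of a wiring that identify no clashing pair. -/
def walkMatrices (ρ : Fin 5 → Fin 5) (E : Fin m × Bool ≃ Fin 5 ⊕ Fin k × Fin 3) : List ℕ :=
  search 20 (mask (clashes ρ k)) (endCode ρ E) (comb 21 20)

/-- The bit matrix `P` identifies none of the pairs in `l` satisfying `K`. -/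
def Avoids (K : Fin 5 → Fin 5 → Prop) (l : List (Fin 5 × Fin 5)) (P : ℕ) : Prop :=
  ∀ p ∈ l, K p.1 p.2 → ¬ P.testBit (20 * p.1 + p.2)

open Classical in
theorem ncard_separatingBits_eq_countP (hρ : ∀ i, ρ i ≠ i) (hK_symm : ∀ i j, K i j → K j i)
    (hK : ∀ i, K i (ρ i)) (hk : k ≤ 5) (E : Fin m × Bool ≃ Fin 5 ⊕ Fin k × Fin 3) :
    (separatingBits ρ K (wire E)).ncard =
      (walkMatrices ρ E).countP fun P ↦ Avoids K (freePairs ρ) P := by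
  have hiff (g : Fin m → Bool) := represents_walkLink (ρ := ρ) hk E g
  rw [ncard_separatingBits_wire, walkMatrices, countP_search, Set.ncard_eq_toFinset_card',
    Set.toFinset_ofPred, Finset.card_filter]
  refine Finset.sum_congr rfl fun g _ ↦ if_congr ?_ rfl rfl
  rw [isSeparating_iff hρ hK_symm hK, and_mask_eq_zero_iff, decide_eq_true_iff, Avoids]
  simp only [← hiff g _ _]
  rfl

/-- For every set of the listed pairs, the matrices in `A` that identify no pair of the set are at
most four times as many as those in `B`. -/
def dominates : List (Fin 5 × Fin 5) → List ℕ → List ℕ → Bool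
  | [], A, B => Nat.ble A.length (4 * B.length)
  | p :: l, A, B => dominates l A B &&
      dominates l (A.filter fun P ↦ !P.testBit (20 * p.1 + p.2))
        (B.filter fun P ↦ !P.testBit (20 * p.1 + p.2))

open Classical in
lemma countP_avoids_le {l : List (Fin 5 × Fin 5)} {A B : List ℕ} (h : dominates l A B) :
    A.countP (fun P ↦ Avoids K l P) ≤ 4 * B.countP fun P ↦ Avoids K l P := by
  induction l generalizing A B with
  | nil => simpa [Avoids, dominates] using h
  | cons p l ih =>
    rw [dominates, Bool.and_eq_true] at h
    by_cases hp : K p.1 p.2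
    · have hfilter := ih h.2
      simp only [List.countP_filter] at hfilter
      convert hfilter using 4 <;> simp [Avoids, hp, Bool.and_comm]
    · simpa [Avoids, hp] using ih h.1

/-- The ends of the edges at a pentagon: edge `2 * i` joins port `i` to corner `0` of vertex `i`,
and edge `2 * i + 1` joins corner `1` of vertex `i` to corner `2` of vertex `i + 1`. -/
def pentagonEnd (d : Fin (5 * 2) × Bool) : Fin 5 ⊕ Fin 5 × Fin 3 :=
  match d.1.modNat, d.2 with
  | 0, false => Sum.inl d.1.divNat
  | 0, true => Sum.inr (d.1.divNat, 0)
  | 1, false => Sum.inr (d.1.divNat, 1)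
  | 1, true => Sum.inr (d.1.divNat + 1, 2)

/-- The edges at a pentagon with one further edge to each of five ports. -/
noncomputable def pentagonWiring : Fin (5 * 2) × Bool ≃ Fin 5 ⊕ Fin 5 × Fin 3 :=
  Equiv.ofBijective pentagonEnd (by decide)

/-- The ends of the edges of a reduction: ports `0` and `1` are joined to each other, and ports
`2`, `3`, `4` are joined to a new vertex. -/
def reducedEnd : Fin 4 × Bool → Fin 5 ⊕ Fin 1 × Fin 3
  | (0, false) => Sum.inl 0
  | (0, true) => Sum.inl 1
  | (⟨c + 1, h⟩, false) => Sum.inl ⟨c + 2, by omega⟩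
  | (⟨c + 1, h⟩, true) => Sum.inr (0, ⟨c, by omega⟩)

/-- The edges of a reduction: ports `σ 0` and `σ 1` are joined to each other, and the other ports
are joined to a new vertex. -/
noncomputable def reducedWiring (σ : Equiv.Perm (Fin 5)) : Fin 4 × Bool ≃ Fin 5 ⊕ Fin 1 × Fin 3 :=
  (Equiv.ofBijective reducedEnd (by decide)).trans (Equiv.sumCongr σ (Equiv.refl _))

/-- The reduction that joins the ports `i` and `i + 1`. -/
noncomputable def adjacentWiring (i : Fin 5) : Fin 4 × Bool ≃ Fin 5 ⊕ Fin 1 × Fin 3 :=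
  reducedWiring (Equiv.addRight i)

/-- The reduction that joins the ports `i` and `i + 2`. -/
noncomputable def distantWiring (i : Fin 5) : Fin 4 × Bool ≃ Fin 5 ⊕ Fin 1 × Fin 3 :=
  reducedWiring ((Equiv.swap 1 2).trans (Equiv.addRight i))

/-- The matrices of all ten reductions, where those that join neighbouring ports count twice. -/
noncomputable def reducedMatrices (ρ : Fin 5 → Fin 5) : List ℕ :=
  (List.finRange 5).flatMap fun i ↦ walkMatrices ρ (adjacentWiring i) ++
    walkMatrices ρ (adjacentWiring i) ++ walkMatrices ρ (distantWiring i)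

theorem dominates_pentagon : ∀ ρ : Equiv.Perm (Fin 5), (∀ i, ρ i ≠ i) →
    dominates (freePairs ρ) (reducedMatrices ρ) (walkMatrices ρ pentagonWiring) := by
  decide +kernel

theorem sum_ncard_separatingBits_le {ρ : Equiv.Perm (Fin 5)} (hρ : ∀ i, ρ i ≠ i)
    (hK_symm : ∀ i j, K i j → K j i) (hK : ∀ i, K i (ρ i)) :
    ∑ i, (2 * (separatingBits ρ K (wire (adjacentWiring i))).ncard +
        (separatingBits ρ K (wire (distantWiring i))).ncard) ≤
      4 * (separatingBits ρ K (wire pentagonWiring)).ncard := by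
  classical
  have hcount := countP_avoids_le (K := K) (dominates_pentagon ρ hρ)
  simp only [reducedMatrices, List.countP_flatMap, Function.comp_def,
    List.countP_append] at hcount
  simp only [ncard_separatingBits_eq_countP hρ hK_symm hK (show 1 ≤ 5 by norm_num),
    ncard_separatingBits_eq_countP hρ hK_symm hK le_rfl, Fin.sum_univ_def, two_mul]
  exact hcount

end Count

section Pentagon

variable {O : Type*} [Finite O] {port : Fin 5 → O × Fin 3} {opo : O × Fin 3 → O × Fin 3}

lemma sum_ncard_admissibleBits_le (hP : IsOuterPiece port opo) (βo : OuterBit port opo)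
    (hβo : IsSimple opo βo.1) :
    ∑ i, (2 * (admissibleBits (SlotEquiv port opo βo.1) (SlotMeet port opo βo.1)
          (wire (adjacentWiring i))).ncard +
        (admissibleBits (SlotEquiv port opo βo.1) (SlotMeet port opo βo.1)
          (wire (distantWiring i))).ncard) ≤
      4 * (admissibleBits (SlotEquiv port opo βo.1) (SlotMeet port opo βo.1)
        (wire pentagonWiring)).ncard := by
  obtain ⟨ε, ρ, K, hρ, hK_symm, hK, hR, hM⟩ := exists_walk_relation
    (R := SlotEquiv port opo βo.1) (M := SlotMeet port opo βo.1)
    (exists_slotEquiv_iff hP βo hβo) (fun _ _ ↦ CornerEquiv.symm)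
    (fun _ _ ⟨x, c, c', h, h'⟩ ↦ ⟨x, c', c, h', h⟩)
    (fun i b b' ↦ ⟨(port i).1, _, _, .refl _, .refl _⟩)
    (fun _ _ _ ⟨x, c, c', h, h'⟩ hR ↦ ⟨x, c, c', h, h'.trans hR⟩)
  simp only [ncard_admissibleBits_eq (wire_involutive _) hR hM]
  exact sum_ncard_separatingBits_le hρ hK_symm hK

theorem sum_nu_le {W W' : Type*} (hP : IsOuterPiece port opo)
    {H : SimpleGraph W} {e : O ⊕ Fin 5 ≃ W} {A D : Fin 5 → SimpleGraph W'} {e' : O ⊕ Fin 1 ≃ W'}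
    (hH : IsDartModel H e (glueOp port opo (wire pentagonWiring)))
    (hA : ∀ i, IsDartModel (A i) e' (glueOp port opo (wire (adjacentWiring i))))
    (hD : ∀ i, IsDartModel (D i) e' (glueOp port opo (wire (distantWiring i)))) :
    ∑ i, (2 * nu (A i) + nu (D i)) ≤ 4 * nu H := by
  have := Fintype.ofFinite (OuterBit port opo)
  simp only [nu_eq_ncard_isSimple hH, fun i ↦ nu_eq_ncard_isSimple (hA i),
    fun i ↦ nu_eq_ncard_isSimple (hD i), ncard_isSimple_glue hP, Finset.mul_sum,
    ← Finset.sum_add_distrib]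
  rw [Finset.sum_comm]
  refine Finset.sum_le_sum fun βo _ ↦ ?_
  by_cases hβo : IsSimple opo βo.1
  · simpa only [hβo, true_and, Set.ofPred_mem_eq] using sum_ncard_admissibleBits_le hP βo hβo
  · simp [hβo]

end Pentagon

/-! ### Dart models of cubic graphs -/

section Labelling

variable {Z W : Type*} {H : SimpleGraph W} {e : Z ≃ W}

lemma exists_injective_adj (hH : IsCubic H) (x : Z) :
    ∃ f : Fin 3 → Z, Function.Injective f ∧ ∀ c, H.Adj (e x) (e (f c)) := by
  have hcard : Nat.card (H.neighborSet (e x)) = 3 := hH (e x)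
  have := Nat.finite_of_card_ne_zero (hcard ▸ three_ne_zero)
  let φ := Finite.equivFinOfCardEq hcard
  exact ⟨fun c ↦ e.symm (φ.symm c), e.symm.injective.comp
    (Subtype.val_injective.comp φ.symm.injective), fun c ↦ by
      rw [e.apply_symm_apply]
      exact (φ.symm c).2⟩

lemma exists_eq_of_adj (hH : IsCubic H) {x x' : Z} {f : Fin 3 → Z} (hf : Function.Injective f)
    (hadj : ∀ c, H.Adj (e x) (e (f c))) (h : H.Adj (e x) (e x')) : ∃ c, f c = x' := by
  have hcard := Nat.card_range_of_injective (e.injective.comp hf)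
  have hrange : Set.range (e ∘ f) = H.neighborSet (e x) :=
    Set.eq_of_subset_of_ncard_le (Set.range_subset_iff.2 hadj)
      (by rw [hH, ← Nat.card_coe_set_eq, hcard, Nat.card_eq_fintype_card, Fintype.card_fin])
      (Set.finite_of_ncard_ne_zero (by rw [hH]; norm_num))
  have hmem : e x' ∈ H.neighborSet (e x) := h
  obtain ⟨c, hc⟩ := hrange ▸ hmem
  exact ⟨c, e.injective hc⟩

lemma exists_isDartModel (hH : IsCubic H) {f : Z → Fin 3 → Z} (hf : ∀ x, Function.Injective (f x))
    (hadj : ∀ x c, H.Adj (e x) (e (f x c))) :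
    ∃ op, IsDartModel H e op ∧ ∀ x c, (op (x, c)).1 = f x c := by
  have hback (d : Z × Fin 3) : ∃ c, f (f d.1 d.2) c = d.1 :=
    exists_eq_of_adj hH (hf _) (hadj _) (hadj d.1 d.2).symm
  choose back hback using hback
  refine ⟨fun d ↦ (f d.1 d.2, back d), ⟨fun d ↦ ?_, fun x x' ↦ ⟨?_, ?_⟩, hf⟩, fun _ _ ↦ rfl⟩
  · refine Prod.ext (hback d) (hf d.1 ?_)
    simpa only [hback d] using hback (f d.1 d.2, back d)
  · exact exists_eq_of_adj hH (hf x) (hadj x)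
  · rintro ⟨c, rfl⟩
    exact hadj x c

lemma IsDartModel.op_fst_ne {op : Z × Fin 3 → Z × Fin 3} (M : IsDartModel H e op) (d : Z × Fin 3) :
    (op d).1 ≠ d.1 := fun h ↦
  H.irrefl ((M.adj_iff d.1 d.1).2 ⟨d.2, h⟩)

end Labelling

section Cut

variable {ι O J : Type*} {port : ι → O × Fin 3} {op : (O ⊕ J) × Fin 3 → (O ⊕ J) × Fin 3}
  {q : ι ⊕ J × Fin 3 → ι ⊕ J × Fin 3}

/-- The opposite darts `op` restricted to the outer vertices; an outer dart whose partner is an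
inner one becomes a fixed point. -/
def outerOp (op : (O ⊕ J) × Fin 3 → (O ⊕ J) × Fin 3) (d : O × Fin 3) : O × Fin 3 :=
  (op (outerDart J d)).1.elim (fun x ↦ (x, (op (outerDart J d)).2)) fun _ ↦ d

lemma outerOp_eq_of_op_eq {d d' : O × Fin 3} (h : op (outerDart J d) = outerDart J d') :
    outerOp op d = d' := by
  rw [outerOp, h]
  rfl

lemma outerOp_eq_self {d : O × Fin 3} {w : J × Fin 3}
    (h : op (outerDart J d) = (Sum.inr w.1, w.2)) : outerOp op d = d := by
  rw [outerOp, h]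
  rfl

lemma op_outerDart (hop : Function.Involutive op)
    (hq : ∀ w, op (wiredDart port w) = wiredDart port (q w)) {d : O × Fin 3}
    (hd : d ∉ Set.range port) : op (outerDart J d) = outerDart J (outerOp op d) := by
  obtain ⟨w, hw⟩ | ⟨d', -, hd'⟩ := wiredDart_or_outerDart port (op (outerDart J d))
  · refine (outerDart_ne_wiredDart hd ⟨q w, ?_⟩).elim
    rw [← hq, ← hw, hop]
  · rw [outerOp_eq_of_op_eq hd', hd']

lemma glueOp_outerOp (hop : Function.Involutive op) (hport : Function.Injective port)
    (hq : ∀ w, op (wiredDart port w) = wiredDart port (q w)) :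
    glueOp port (outerOp op) q = op := by
  funext d
  obtain ⟨w, rfl⟩ | ⟨d, hd, rfl⟩ := wiredDart_or_outerDart port d
  · rw [glueOp_wiredDart hport, hq]
  · rw [glueOp_outerDart hd, op_outerDart hop hq hd]

lemma isOuterPiece_outerOp (hop : Function.Involutive op) (hfix : ∀ d, op d ≠ d)
    (hport : Function.Injective port) (hq : ∀ w, op (wiredDart port w) = wiredDart port (q w))
    (hinner : ∀ i, ∃ w, q (Sum.inl i) = Sum.inr w) : IsOuterPiece port (outerOp op) := by
  have hself (i : ι) : outerOp op (port i) = port i := by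
    obtain ⟨w, hw⟩ := hinner i
    exact outerOp_eq_self (w := w) ((hq (Sum.inl i)).trans (by rw [hw]; rfl))
  refine ⟨hport, fun d ↦ ?_, fun d ↦ ⟨fun h ↦ ?_, ?_⟩⟩
  · by_cases hd : d ∈ Set.range port
    · obtain ⟨i, rfl⟩ := hd
      rw [hself, hself]
    · exact outerOp_eq_of_op_eq (by rw [← op_outerDart hop hq hd, hop])
  · by_contra hd
    exact hfix _ ((op_outerDart hop hq hd).trans (by rw [h]))
  · rintro ⟨i, rfl⟩
    exact hself i

end Cut

section Glued

variable {ι O J W : Type*} {port : ι → O × Fin 3} {opo : O × Fin 3 → O × Fin 3}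
  {q : ι ⊕ J × Fin 3 → ι ⊕ J × Fin 3} {H : SimpleGraph W} {e : O ⊕ J ≃ W}

lemma exists_glueOp_fst_eq_iff (hport : Function.Injective port) (z z' : O ⊕ J) :
    (∃ y, (glueOp port opo q (z, y)).1 = z') ↔
      (∃ d ∉ Set.range port, z = Sum.inl d.1 ∧ z' = Sum.inl (opo d).1) ∨
        ∃ w, z = (wiredDart port w).1 ∧ z' = (wiredDart port (q w)).1 := by
  constructor
  · rintro ⟨y, rfl⟩
    obtain ⟨w, hw⟩ | ⟨d, hd, hz⟩ := wiredDart_or_outerDart port (z, y)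
    · exact Or.inr ⟨w, congrArg Prod.fst hw, by rw [hw, glueOp_wiredDart hport]⟩
    · exact Or.inl ⟨d, hd, congrArg Prod.fst hz, by rw [hz, glueOp_outerDart hd]; rfl⟩
  · rintro (⟨d, hd, rfl, rfl⟩ | ⟨w, rfl, rfl⟩)
    · exact ⟨d.2, congrArg Prod.fst (glueOp_outerDart hd)⟩
    · exact ⟨(wiredDart port w).2, congrArg Prod.fst (glueOp_wiredDart hport w)⟩

lemma glueOp_outerDart_fst_ne (hport : Function.Injective port) {d : O × Fin 3}
    (hd : d ∉ Set.range port) (hne : ∀ j, (opo d).1 ≠ (port j).1) (i : ι) :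
    (glueOp port opo q (outerDart J d)).1 ≠ (glueOp port opo q (outerDart J (port i))).1 := by
  have hi := glueOp_wiredDart (opo := opo) (q := q) hport (Sum.inl i)
  rw [wiredDart] at hi
  rw [glueOp_outerDart hd, hi]
  rcases q (Sum.inl i) with j | w
  · exact fun h ↦ hne j (Sum.inl_injective h)
  · exact Sum.inl_ne_inr

lemma isDartModel_glueOp (hP : IsOuterPiece port opo) (hq : Function.Involutive q)
    (hport : Function.Injective fun i ↦ (port i).1)
    (houter : ∀ d ∉ Set.range port, ∀ d' ∉ Set.range port, d.1 = d'.1 →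
      (opo d).1 = (opo d').1 → d = d')
    (hnadj : ∀ d ∉ Set.range port, ∀ i j, d.1 = (port i).1 → (opo d).1 ≠ (port j).1)
    (hinner : ∀ z, Function.Injective fun c ↦ (wiredDart port (q (Sum.inr (z, c)))).1)
    (hadj : ∀ z z', H.Adj (e z) (e z') ↔
      (∃ d ∉ Set.range port, z = Sum.inl d.1 ∧ z' = Sum.inl (opo d).1) ∨
        ∃ w, z = (wiredDart port w).1 ∧ z' = (wiredDart port (q w)).1) :
    IsDartModel H e (glueOp port opo q) := by
  refine ⟨glueOp_involutive hP hq, fun z z' ↦ ?_, ?_⟩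
  · rw [hadj, exists_glueOp_fst_eq_iff hP.injective]
  rintro (x | z) y y' h
  · by_cases hy : (x, y) ∈ Set.range port <;> by_cases hy' : (x, y') ∈ Set.range port
    · obtain ⟨i, hi⟩ := hy
      obtain ⟨j, hj⟩ := hy'
      obtain rfl : i = j := hport (by simp only [hi, hj])
      exact congrArg Prod.snd (hi.symm.trans hj)
    · obtain ⟨i, hi⟩ := hy
      have hne := glueOp_outerDart_fst_ne (q := q) hP.injective hy' fun j ↦
        hnadj _ hy' i j (by rw [hi])
      exact (hne i (by rw [hi]; exact h.symm)).elim
    · obtain ⟨i, hi⟩ := hy'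
      have hne := glueOp_outerDart_fst_ne (q := q) hP.injective hy fun j ↦
        hnadj _ hy i j (by rw [hi])
      exact (hne i (by rw [hi]; exact h)).elim
    · refine congrArg Prod.snd (houter _ hy _ hy' rfl (Sum.inl_injective (β := J) ?_))
      have h' : (glueOp port opo q (outerDart J (x, y))).1 =
        (glueOp port opo q (outerDart J (x, y'))).1 := h
      rwa [glueOp_outerDart hy, glueOp_outerDart hy'] at h'
  · have hinr (c : Fin 3) := glueOp_wiredDart (opo := opo) (q := q) hP.injective (Sum.inr (z, c))
    exact hinner z ((congrArg Prod.fst (hinr y)).symm.trans (h.trans (congrArg Prod.fst (hinr y'))))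

end Glued

/-! ### The pentagon and its reductions -/

section PentagonModel

variable {O W : Type*} {H : SimpleGraph W} {e : O ⊕ Fin 5 ≃ W} {u : Fin 5 → O}

/-- The neighbours of the vertex `i` of a pentagon, where `u i` is the one off the pentagon. -/
def pentagonNbr (u : Fin 5 → O) (i : Fin 5) : Fin 3 → O ⊕ Fin 5 :=
  ![Sum.inl (u i), Sum.inr (i + 1), Sum.inr (i - 1)]

lemma pentagonNbr_injective (i : Fin 5) : Function.Injective (pentagonNbr u i) := by
  have hne : i + 1 ≠ i - 1 := by decide +revert
  intro c c' h
  fin_cases c <;> fin_cases c' <;> simp [pentagonNbr, hne, hne.symm] at h ⊢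

lemma op_wire {κ α β : Type*} {E : κ × Bool ≃ β} {f : β → α} {op : α → α}
    (hop : Function.Involutive op) (h : ∀ i, op (f (E (i, false))) = f (E (i, true))) (w : β) :
    op (f w) = f (wire E w) := by
  obtain ⟨⟨i, _ | _⟩, rfl⟩ := E.surjective w
  · rw [h, wire_apply, Bool.not_false]
  · rw [← h, hop, wire_apply, Bool.not_true]

lemma exists_isDartModel_pentagon (hH : IsCubic H)
    (hcycle : ∀ i, H.Adj (e (Sum.inr i)) (e (Sum.inr (i + 1))))
    (hspoke : ∀ i, H.Adj (e (Sum.inr i)) (e (Sum.inl (u i)))) :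
    ∃ op, IsDartModel H e op ∧ ∀ i c, (op (Sum.inr i, c)).1 = pentagonNbr u i c := by
  choose f hf hadj using fun x : O ↦ exists_injective_adj (e := e) hH (Sum.inl x)
  obtain ⟨op, hop, hfst⟩ := exists_isDartModel (e := e) (f := Sum.elim f (pentagonNbr u)) hH
    (by rintro (x | i); exacts [hf x, pentagonNbr_injective i])
    (by
      rintro (x | i) c
      · exact hadj x c
      · fin_cases c
        · exact hspoke i
        · exact hcycle i
        · simpa [pentagonNbr] using (hcycle (i - 1)).symm)
  exact ⟨op, hop, fun i ↦ hfst (Sum.inr i)⟩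

lemma op_pentagon {op : (O ⊕ Fin 5) × Fin 3 → (O ⊕ Fin 5) × Fin 3} (hop : IsDartModel H e op)
    (hfst : ∀ i c, (op (Sum.inr i, c)).1 = pentagonNbr u i c) (i : Fin 5) :
    op (Sum.inr i, 1) = (Sum.inr (i + 1), 2) := by
  have hnext : (op (Sum.inr i, 1)).1 = Sum.inr (i + 1) := hfst i 1
  refine Prod.ext hnext (pentagonNbr_injective (u := u) (i + 1) ?_)
  rw [← hfst, ← hnext, Prod.mk.eta, hop.involutive]
  simp [pentagonNbr]

lemma wire_pentagonWiring_inl (i : Fin 5) :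
    wire pentagonWiring (Sum.inl i) = Sum.inr (i, 0) := by
  have hport : pentagonEnd (finProdFinEquiv (i, 0), false) = Sum.inl i := by decide +revert
  have hcorner : pentagonEnd (finProdFinEquiv (i, 0), true) = Sum.inr (i, 0) := by decide +revert
  exact hport ▸ (wire_apply pentagonWiring _ _).trans hcorner

lemma exists_isOuterPiece_pentagon (hH : IsCubic H)
    (hcycle : ∀ i, H.Adj (e (Sum.inr i)) (e (Sum.inr (i + 1))))
    (hspoke : ∀ i, H.Adj (e (Sum.inr i)) (e (Sum.inl (u i)))) (hu : Function.Injective u) :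
    ∃ port opo, IsOuterPiece port opo ∧ (∀ i, (port i).1 = u i) ∧
      IsDartModel H e (glueOp port opo (wire pentagonWiring)) := by
  obtain ⟨op, hop, hfst⟩ := exists_isDartModel_pentagon hH hcycle hspoke
  let port (i : Fin 5) : O × Fin 3 := (u i, (op (Sum.inr i, 0)).2)
  have hport : Function.Injective port := fun i j h ↦ hu (congrArg Prod.fst h)
  have hspoke (i : Fin 5) : op (outerDart (Fin 5) (port i)) = (Sum.inr i, 0) := by
    rw [← hop.involutive (Sum.inr i, 0)]
    exact congrArg op (Prod.ext (hfst i 0).symm rfl)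
  have hwire := op_wire (E := pentagonWiring) (f := wiredDart port) hop.involutive fun i ↦ by
    change op (wiredDart port (pentagonEnd (i, false))) = wiredDart port (pentagonEnd (i, true))
    unfold pentagonEnd
    rcases i.modNat with ⟨_ | _ | _, _⟩
    · exact hspoke _
    · exact op_pentagon hop hfst _
    · omega
  refine ⟨port, outerOp op, ?_, fun i ↦ rfl, by rwa [glueOp_outerOp hop.involutive hport hwire]⟩
  exact isOuterPiece_outerOp hop.involutive (fun d h ↦ hop.op_fst_ne d (by rw [h])) hport hwire
    fun i ↦ ⟨_, wire_pentagonWiring_inl i⟩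

end PentagonModel

section ReducedModel

variable {O J W W' : Type*} {H : SimpleGraph W} {H' : SimpleGraph W'} {u : Fin 5 → O}
  {σ : Equiv.Perm (Fin 5)}

/-- `H'` arises from `H` by replacing the vertices `J` with a single new vertex that is adjacent to
the `u m` with `m ≠ j, k`, and joining `u j` to `u k`. -/
structure IsReduction (H : SimpleGraph W) (e : O ⊕ J ≃ W) (u : Fin 5 → O) (j k : Fin 5)
    (H' : SimpleGraph W') (e' : O ⊕ Fin 1 ≃ W') : Prop where
  adj_outer : ∀ x x', H'.Adj (e' (Sum.inl x)) (e' (Sum.inl x')) ↔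
    H.Adj (e (Sum.inl x)) (e (Sum.inl x')) ∨ (x = u j ∧ x' = u k) ∨ (x = u k ∧ x' = u j)
  adj_new : ∀ x, H'.Adj (e' (Sum.inl x)) (e' (Sum.inr 0)) ↔ ∃ m, m ≠ j ∧ m ≠ k ∧ x = u m

lemma exists_wire_iff {κ α : Type*} {E : κ × Bool ≃ α} {r : α → α → Prop} :
    (∃ w, r w (wire E w)) ↔
      ∃ i, r (E (i, false)) (E (i, true)) ∨ r (E (i, true)) (E (i, false)) := by
  simp only [← E.exists_congr_right, Prod.exists, Bool.exists_bool, wire_apply, Bool.not_false,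
    Bool.not_true]

lemma exists_wire_reducedWiring_iff {r : Fin 5 ⊕ Fin 1 × Fin 3 → Fin 5 ⊕ Fin 1 × Fin 3 → Prop} :
    (∃ w, r w (wire (reducedWiring σ) w)) ↔
      (r (Sum.inl (σ 0)) (Sum.inl (σ 1)) ∨ r (Sum.inl (σ 1)) (Sum.inl (σ 0))) ∨
        ∃ c : Fin 3, r (Sum.inl (σ c.succ.succ)) (Sum.inr (0, c)) ∨
          r (Sum.inr (0, c)) (Sum.inl (σ c.succ.succ)) := by
  rw [exists_wire_iff, Fin.exists_fin_succ]
  rfl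

lemma wire_reducedWiring_inr (z : Fin 1) (c : Fin 3) :
    wire (reducedWiring σ) (Sum.inr (z, c)) = Sum.inl (σ c.succ.succ) := by
  rw [Subsingleton.elim z 0]
  exact wire_apply (reducedWiring σ) c.succ true

lemma exists_ne_iff_exists_succ_succ {p : Fin 5 → Prop} :
    (∃ m, m ≠ σ 0 ∧ m ≠ σ 1 ∧ p m) ↔ ∃ c : Fin 3, p (σ c.succ.succ) := by
  have hne (c : Fin 3) : c.succ.succ ≠ (1 : Fin 5) := by decide +revert
  rw [← σ.exists_congr_right, Fin.exists_fin_succ, Fin.exists_fin_succ]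
  simp [hne]

variable {e : O ⊕ J ≃ W} {e' : O ⊕ Fin 1 ≃ W'} {port : Fin 5 → O × Fin 3}
  {opo : O × Fin 3 → O × Fin 3} {q : Fin 5 ⊕ J × Fin 3 → Fin 5 ⊕ J × Fin 3}

lemma IsDartModel.adj_inl_iff (M : IsDartModel H e (glueOp port opo q))
    (hport : Function.Injective port) (hinner : ∀ i, ∃ w, q (Sum.inl i) = Sum.inr w) (x x' : O) :
    H.Adj (e (Sum.inl x)) (e (Sum.inl x')) ↔
      ∃ d ∉ Set.range port, x = d.1 ∧ x' = (opo d).1 := by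
  rw [M.adj_iff, exists_glueOp_fst_eq_iff hport]
  simp only [Sum.inl.injEq, or_iff_left_iff_imp]
  rintro ⟨i | w, hx, hx'⟩
  · obtain ⟨w, hw⟩ := hinner i
    rw [hw] at hx'
    exact (Sum.inl_ne_inr hx').elim
  · exact (Sum.inl_ne_inr hx).elim

lemma IsDartModel.eq_of_opo_fst_eq (M : IsDartModel H e (glueOp port opo q)) {d d' : O × Fin 3}
    (hd : d ∉ Set.range port) (hd' : d' ∉ Set.range port) (hfst : d.1 = d'.1)
    (hopo : (opo d).1 = (opo d').1) : d = d' := by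
  refine Prod.ext hfst (M.injective (Sum.inl d.1) ?_)
  have h := congrArg Prod.fst (glueOp_outerDart (J := J) (opo := opo) (q := q) hd)
  have h' := congrArg Prod.fst (glueOp_outerDart (J := J) (opo := opo) (q := q) hd')
  simp only [outerDart, ← hfst, ← hopo] at h h'
  exact h.trans h'.symm

lemma IsReduction.adj_iff (hred : IsReduction H e u (σ 0) (σ 1) H' e')
    (M : IsDartModel H e (glueOp port opo q)) (hport : Function.Injective port)
    (hinner : ∀ i, ∃ w, q (Sum.inl i) = Sum.inr w) (hfst : ∀ i, (port i).1 = u i)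
    (z z' : O ⊕ Fin 1) : H'.Adj (e' z) (e' z') ↔
      (∃ d ∉ Set.range port, z = Sum.inl d.1 ∧ z' = Sum.inl (opo d).1) ∨
        ∃ w, z = (wiredDart port w).1 ∧ z' = (wiredDart port (wire (reducedWiring σ) w)).1 := by
  rw [exists_wire_reducedWiring_iff
    (r := fun w w' ↦ z = (wiredDart port w).1 ∧ z' = (wiredDart port w').1)]
  have hinr (x : O) : H'.Adj (e' (Sum.inl x)) (e' (Sum.inr 0)) ↔
      ∃ c : Fin 3, x = u (σ c.succ.succ) := (hred.adj_new x).trans exists_ne_iff_exists_succ_succ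
  rcases z with x | z <;> rcases z' with x' | z'
  · rw [hred.adj_outer, M.adj_inl_iff hport hinner]
    simp [wiredDart, outerDart, hfst]
  · rw [Subsingleton.elim z' 0, hinr]
    simp [wiredDart, outerDart, hfst]
  · rw [Subsingleton.elim z 0, H'.adj_comm, hinr]
    simp [wiredDart, outerDart, hfst]
  · rw [Subsingleton.elim z z']
    simp [wiredDart, outerDart]

theorem IsReduction.isDartModel (hred : IsReduction H e u (σ 0) (σ 1) H' e')
    (hP : IsOuterPiece port opo) (M : IsDartModel H e (glueOp port opo q))
    (hinner : ∀ i, ∃ w, q (Sum.inl i) = Sum.inr w) (hfst : ∀ i, (port i).1 = u i)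
    (hu : Function.Injective u) (hnadj : ∀ i j, ¬ H.Adj (e (Sum.inl (u i))) (e (Sum.inl (u j)))) :
    IsDartModel H' e' (glueOp port opo (wire (reducedWiring σ))) := by
  refine isDartModel_glueOp hP (wire_involutive _) (by simpa only [hfst] using hu)
    (fun d hd d' hd' ↦ M.eq_of_opo_fst_eq hd hd') (fun d hd i j hi hj ↦ hnadj i j ?_)
    (fun z c c' h ↦ ?_) (hred.adj_iff M hP.injective hinner hfst)
  · exact (M.adj_inl_iff hP.injective hinner _ _).2 ⟨d, hd, by rw [hi, hfst], by rw [hj, hfst]⟩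
  · simp only [wire_reducedWiring_inr, wiredDart, outerDart, hfst, Sum.inl.injEq] at h
    simpa using hu h

end ReducedModel

theorem sum_nu_le_of_isReduction {O W W' : Type*} [Finite O] {H : SimpleGraph W}
    {e : O ⊕ Fin 5 ≃ W} {H' : Fin 5 → Fin 5 → SimpleGraph W'} {e' : O ⊕ Fin 1 ≃ W'}
    {u : Fin 5 → O} (hH : IsCubic H) (hcycle : ∀ i, H.Adj (e (Sum.inr i)) (e (Sum.inr (i + 1))))
    (hspoke : ∀ i, H.Adj (e (Sum.inr i)) (e (Sum.inl (u i)))) (hu : Function.Injective u)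
    (hnadj : ∀ i j, ¬ H.Adj (e (Sum.inl (u i))) (e (Sum.inl (u j))))
    (hred : ∀ j k, j ≠ k → IsReduction H e u j k (H' j k) e') :
    ∑ i, (2 * nu (H' i (i + 1)) + nu (H' i (i + 2))) ≤ 4 * nu H := by
  obtain ⟨port, opo, hP, hfst, hmodel⟩ := exists_isOuterPiece_pentagon hH hcycle hspoke hu
  have hreduced (σ : Equiv.Perm (Fin 5)) :
      IsDartModel (H' (σ 0) (σ 1)) e' (glueOp port opo (wire (reducedWiring σ))) :=
    (hred _ _ (σ.injective.ne zero_ne_one)).isDartModel hP hmodel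
      (fun i ↦ ⟨_, wire_pentagonWiring_inl i⟩) hfst hu hnadj
  refine sum_nu_le (e' := e') hP hmodel (fun i ↦ ?_) fun i ↦ ?_
  · simpa [adjacentWiring, add_comm] using hreduced (Equiv.addRight i)
  · have hzero : Equiv.swap (1 : Fin 5) 2 0 = 0 := by decide
    simpa [distantWiring, hzero, add_comm] using
      hreduced ((Equiv.swap 1 2).trans (Equiv.addRight i))

section CycleSplit

variable {V : Type*} {G : SimpleGraph V} {v u : Fin 5 → V}

/-- The vertices of a graph, split into those off the cycle `v` and those on it. -/
noncomputable def cycleSplit (hv : Function.Injective v) :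
    {x : V // ∀ j, x ≠ v j} ⊕ Fin 5 ≃ V :=
  Equiv.ofBijective (Sum.elim Subtype.val v)
    ⟨Subtype.val_injective.sumElim hv fun x ↦ x.2, fun x ↦ by
      by_cases hx : ∃ j, v j = x
      · exact ⟨Sum.inr hx.choose, hx.choose_spec⟩
      · exact ⟨Sum.inl ⟨x, fun j h ↦ hx ⟨j, h.symm⟩⟩, rfl⟩⟩

lemma cycleSplit_inl (hv : Function.Injective v) (x : {x : V // ∀ j, x ≠ v j}) :
    cycleSplit hv (Sum.inl x) = x.1 := rfl

lemma isReduction_cycleSplit (hv : Function.Injective v) (huv : ∀ i j, u i ≠ v j) {j k : Fin 5}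
    {H' : SimpleGraph ({x : V // ∀ j, x ≠ v j} ⊕ Unit)}
    (hH' : ∀ p q, H'.Adj p q ↔
      (∃ x y, p = Sum.inl x ∧ q = Sum.inl y ∧
        (G.Adj x.1 y.1 ∨ (x.1 = u j ∧ y.1 = u k) ∨ (x.1 = u k ∧ y.1 = u j))) ∨
      (∃ x, p = Sum.inl x ∧ q = Sum.inr () ∧ ∃ m, m ≠ j ∧ m ≠ k ∧ x.1 = u m) ∨
      (∃ x, p = Sum.inr () ∧ q = Sum.inl x ∧ ∃ m, m ≠ j ∧ m ≠ k ∧ x.1 = u m)) :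
    IsReduction G (cycleSplit hv) (fun i ↦ ⟨u i, huv i⟩) j k H'
      (Equiv.sumCongr (Equiv.refl _) (Equiv.ofUnique (Fin 1) Unit)) where
  adj_outer x x' := by
    simp only [Subtype.ext_iff (a2 := (⟨u _, huv _⟩ : {x : V // ∀ j, x ≠ v j})), cycleSplit_inl]
    simp [hH']
  adj_new x := by
    simp only [Subtype.ext_iff (a2 := (⟨u _, huv _⟩ : {x : V // ∀ j, x ≠ v j}))]
    simp [hH']

end CycleSplit

theorem stmt13_general {V : Type*} [Finite V] (G : SimpleGraph V) (hcubic : IsCubic G)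
    (v u : Fin 5 → V)
    (hvinj : Function.Injective v)
    (hcycle : ∀ i : Fin 5, G.Adj (v i) (v (i + 1)))
    (huadj : ∀ i : Fin 5, G.Adj (v i) (u i))
    (huinj : Function.Injective u)
    (huv : ∀ i j : Fin 5, u i ≠ v j)
    (hunadj : ∀ i j : Fin 5, ¬ G.Adj (u i) (u j))
    (G' : Fin 5 → Fin 5 → SimpleGraph ({x : V // ∀ j : Fin 5, x ≠ v j} ⊕ Unit))
    (hG' : ∀ (j k : Fin 5), j ≠ k → ∀ p q, (G' j k).Adj p q ↔
      (∃ x y, p = Sum.inl x ∧ q = Sum.inl y ∧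
        (G.Adj x.1 y.1 ∨ (x.1 = u j ∧ y.1 = u k) ∨ (x.1 = u k ∧ y.1 = u j))) ∨
      (∃ x, p = Sum.inl x ∧ q = Sum.inr () ∧ ∃ m : Fin 5, m ≠ j ∧ m ≠ k ∧ x.1 = u m) ∨
      (∃ x, p = Sum.inr () ∧ q = Sum.inl x ∧ ∃ m : Fin 5, m ≠ j ∧ m ≠ k ∧ x.1 = u m)) :
    (15 : ℚ) / 4 *
        ((⨅ p : {p : Fin 5 × Fin 5 // p.1 ≠ p.2}, nu (G' p.1.1 p.1.2) : ℕ) : ℚ) ≤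
      (nu G : ℚ) := by
  have hsum := sum_nu_le_of_isReduction (e := cycleSplit hvinj) (u := fun i ↦ ⟨u i, huv i⟩)
    hcubic hcycle huadj (fun i j h ↦ huinj (congrArg Subtype.val h)) hunadj
    fun j k hjk ↦ isReduction_cycleSplit hvinj huv (hG' j k hjk)
  set μ := ⨅ p : {p : Fin 5 × Fin 5 // p.1 ≠ p.2}, nu (G' p.1.1 p.1.2)
  have hμ {j k : Fin 5} (hjk : j ≠ k) : μ ≤ nu (G' j k) :=
    ciInf_le (OrderBot.bddBelow _) (⟨(j, k), hjk⟩ : {p : Fin 5 × Fin 5 // p.1 ≠ p.2})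
  have hle : 15 * μ ≤ 4 * nu G := calc
    15 * μ = ∑ _i : Fin 5, (2 * μ + μ) := by
      rw [Finset.sum_const, Finset.card_univ, Fintype.card_fin, smul_eq_mul]; ring
    _ ≤ ∑ i, (2 * nu (G' i (i + 1)) + nu (G' i (i + 2))) := by
      gcongr with i
      · exact hμ (by simp)
      · exact hμ (by simp)
    _ ≤ 4 * nu G := hsum
  have hle' : (15 : ℚ) * μ ≤ 4 * nu G := mod_cast hle
  linarith

/-- Reducing a 5-cycle `v₀v₁v₂v₃v₄` in a cyclically 4-edge-connected cubic graph with no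
3- or 4-cycles, allowing all ten (possibly crossing) replacements: for each 2-element
subset `{j, k}` of the indices, `G' j k` is obtained by deleting the cycle, adding a new
vertex `w` adjacent to the three `u m` with `m ∉ {j, k}` and adding the edge `u j — u k`.
Then `ν(G) ≥ (15/4) · min_{j ≠ k} ν(G' j k)`. -/
theorem stmt13 {V : Type*} [Fintype V] (G : SimpleGraph V)
    (hcyc : CyclicallyFourEdgeConnected G) (hcubic : IsCubic G)
    (hC3 : ∀ a b c : V, ¬(G.Adj a b ∧ G.Adj b c ∧ G.Adj c a))
    (hC4 : ∀ a b c d : V, a ≠ c → b ≠ d →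
      ¬(G.Adj a b ∧ G.Adj b c ∧ G.Adj c d ∧ G.Adj d a))
    (v u : Fin 5 → V)
    (hvinj : Function.Injective v)
    (hcycle : ∀ i : Fin 5, G.Adj (v i) (v (i + 1)))
    (huadj : ∀ i : Fin 5, G.Adj (v i) (u i))
    (huinj : Function.Injective u)
    (huv : ∀ i j : Fin 5, u i ≠ v j)
    (hunadj : ∀ i j : Fin 5, ¬ G.Adj (u i) (u j))
    (G' : Fin 5 → Fin 5 → SimpleGraph ({x : V // ∀ j : Fin 5, x ≠ v j} ⊕ Unit))
    (hG' : ∀ (j k : Fin 5), j ≠ k → ∀ p q, (G' j k).Adj p q ↔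
      (∃ x y, p = Sum.inl x ∧ q = Sum.inl y ∧
        (G.Adj x.1 y.1 ∨ (x.1 = u j ∧ y.1 = u k) ∨ (x.1 = u k ∧ y.1 = u j))) ∨
      (∃ x, p = Sum.inl x ∧ q = Sum.inr () ∧ ∃ m : Fin 5, m ≠ j ∧ m ≠ k ∧ x.1 = u m) ∨
      (∃ x, p = Sum.inr () ∧ q = Sum.inl x ∧ ∃ m : Fin 5, m ≠ j ∧ m ≠ k ∧ x.1 = u m)) :
    (15 : ℚ) / 4 *
        ((⨅ p : {p : Fin 5 × Fin 5 // p.1 ≠ p.2}, nu (G' p.1.1 p.1.2) : ℕ) : ℚ) ≤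
      (nu G : ℚ) := by
  exact stmt13_general G hcubic v u hvinj hcycle huadj huinj huv hunadj G' hG'

end CiDC
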